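/- Let p be an odd prime and d, r ≥ 1. If r ≤ d and r(p−1) is not of the form jd + 1 for any j = 1, 2, …, p−1, then there is no ℤ/p-equivariant continuous map from X_{d,p} = (Sᵈ)ᵖ ∖ L to the unit sphere S((Δʳ)^⊥) of the orthogonal complement of Δʳ in (ℝᵖ)ʳ. -/

import Mathlib

/-- The cyclic-shift action of the generator of `ℤ/p` on
`X_{d,p} = (Sᵈ)ᵖ ∖ L`, the `p`-fold product of the sphere minus the thin diagonal. -/
def deletedProductShift {p : ℕ} {E : Type*}
    (x : {f : ZMod p → E // ∃ k k', f k ≠ f k'}) :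
    {f : ZMod p → E // ∃ k k', f k ≠ f k'} :=
  ⟨fun k => x.1 (k + 1), by
    obtain ⟨k, k', h⟩ := x.2
    exact ⟨k - 1, k' - 1, by simpa using h⟩⟩

/-- Formal `F`-linear combinations of lists of points (ordered simplices of all dimensions,
including the empty one). -/
abbrev ListChain (F V : Type*) [CommRing F] := List V →₀ F

namespace ListChain

section Algebra

variable {F : Type*} [CommRing F] {V W : Type*}

/-- Two linear maps out of the chains agree if they agree on single lists. -/
theorem hom_ext {M : Type*} [AddCommGroup M] [Module F M] {φ ψ : ListChain F V →ₗ[F] M}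
    (h : ∀ l, φ (Finsupp.single l 1) = ψ (Finsupp.single l 1)) : φ = ψ := by
  refine Finsupp.lhom_ext fun l b => ?_
  have : (Finsupp.single l b : ListChain F V) = b • Finsupp.single l 1 := by simp
  rw [this, map_smul, map_smul, h]

theorem map_mem_of_supported {M : Type*} [AddCommGroup M] [Module F M]
    (φ : ListChain F V →ₗ[F] M) {S : Set (List V)} {N : Submodule F M}
    (h : ∀ l ∈ S, φ (Finsupp.single l 1) ∈ N) {c : ListChain F V}
    (hc : c ∈ Finsupp.supported F F S) : φ c ∈ N := by
  rw [Finsupp.supported_eq_span_single] at hc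
  refine (Submodule.span_le (p := N.comap φ)).2 ?_ hc
  rintro _ ⟨l, hl, rfl⟩
  exact h l hl

theorem map_eq_of_supported {M : Type*} [AddCommGroup M] [Module F M]
    (φ ψ : ListChain F V →ₗ[F] M) {S : Set (List V)}
    (h : ∀ l ∈ S, φ (Finsupp.single l 1) = ψ (Finsupp.single l 1)) {c : ListChain F V}
    (hc : c ∈ Finsupp.supported F F S) : φ c = ψ c := by
  have := map_mem_of_supported (φ - ψ) (N := ⊥) (S := S)
    (fun l hl => by simp [h l hl]) hc
  simpa [sub_eq_zero] using this

/-- Prepend a vertex to every list. -/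
noncomputable def cone (v : V) : ListChain F V →ₗ[F] ListChain F V :=
  Finsupp.lmapDomain F F (List.cons v)

@[simp] theorem cone_single (v : V) (l : List V) (a : F) :
    cone v (Finsupp.single l a) = Finsupp.single (v :: l) a := by
  simp [cone]

/-- The alternating sum of the faces of a list. -/
noncomputable def bdList (F : Type*) [CommRing F] : List V → ListChain F V
  | [] => 0
  | v :: l => Finsupp.single l 1 - cone v (bdList F l)

/-- The (augmented) boundary operator. -/
noncomputable def bd : ListChain F V →ₗ[F] ListChain F V :=
  Finsupp.linearCombination F (bdList F)

@[simp] theorem bd_single (l : List V) :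
    bd (Finsupp.single l (1 : F)) = bdList F l := by
  simp [bd]

theorem bd_cone (v : V) (c : ListChain F V) : bd (cone v c) = c - cone v (bd c) := by
  have : bd ∘ₗ cone v = LinearMap.id - cone v ∘ₗ (bd : ListChain F V →ₗ[F] _) :=
    hom_ext fun l => by simp [bdList]
  exact LinearMap.congr_fun this c

theorem bd_bdList (l : List V) : bd (bdList F l) = 0 := by
  induction l with
  | nil => simp [bdList]
  | cons v l ih => simp [bdList, bd_cone, ih]

theorem bd_bd (c : ListChain F V) : bd (bd c) = 0 := by
  have : bd ∘ₗ bd = (0 : ListChain F V →ₗ[F] ListChain F V) :=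
    hom_ext fun l => by simp [bd_bdList]
  exact LinearMap.congr_fun this c

/-- The chain map induced by a map of vertices. -/
noncomputable def push (f : V → W) : ListChain F V →ₗ[F] ListChain F W :=
  Finsupp.lmapDomain F F (List.map f)

@[simp] theorem push_single (f : V → W) (l : List V) (a : F) :
    push f (Finsupp.single l a) = Finsupp.single (l.map f) a := by
  simp [push]

theorem push_cone (f : V → W) (v : V) (c : ListChain F V) :
    push f (cone v c) = cone (f v) (push f c) := by
  have : push f ∘ₗ cone v = cone (f v) ∘ₗ (push f : ListChain F V →ₗ[F] _) :=
    hom_ext fun l => by simp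
  exact LinearMap.congr_fun this c

theorem bdList_map (f : V → W) (l : List V) : bdList F (l.map f) = push f (bdList F l) := by
  induction l with
  | nil => simp [bdList]
  | cons v l ih => simp [bdList, push_cone, ih]

theorem bd_push (f : V → W) (c : ListChain F V) : bd (push f c) = push f (bd c) := by
  have : bd ∘ₗ push f = push f ∘ₗ (bd : ListChain F V →ₗ[F] _) :=
    hom_ext fun l => by simp [bdList_map]
  exact LinearMap.congr_fun this c

theorem push_push {U : Type*} (g : W → U) (f : V → W) (c : ListChain F V) :
    push g (push f c) = push (g ∘ f) c := by
  have : push g ∘ₗ push f = (push (g ∘ f) : ListChain F V →ₗ[F] _) :=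
    hom_ext fun l => by simp
  exact LinearMap.congr_fun this c

theorem push_id (c : ListChain F V) : push id c = c := by
  have : push id = (LinearMap.id : ListChain F V →ₗ[F] _) := hom_ext fun l => by simp
  exact LinearMap.congr_fun this c

/-- The prism on a list, interpolating between its images under two vertex maps. -/
noncomputable def prismList (F : Type*) [CommRing F] (f g : V → W) : List V → ListChain F W
  | [] => 0
  | v :: l => Finsupp.single (f v :: g v :: l.map g) 1 - cone (f v) (prismList F f g l)

/-- The prism operator, a chain homotopy between two induced chain maps. -/
noncomputable def prism (f g : V → W) : ListChain F V →ₗ[F] ListChain F W :=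
  Finsupp.linearCombination F (prismList F f g)

@[simp] theorem prism_single (f g : V → W) (l : List V) :
    prism f g (Finsupp.single l (1 : F)) = prismList F f g l := by
  simp [prism]

theorem prism_cone (f g : V → W) (v : V) (c : ListChain F V) :
    prism f g (cone v c) = cone (f v) (cone (g v) (push g c)) - cone (f v) (prism f g c) := by
  have : prism f g ∘ₗ cone v = cone (f v) ∘ₗ cone (g v) ∘ₗ push g -
      cone (f v) ∘ₗ (prism f g : ListChain F V →ₗ[F] _) :=
    hom_ext fun l => by simp [prismList]
  exact LinearMap.congr_fun this c

theorem bd_prism (f g : V → W) (c : ListChain F V) :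
    bd (prism f g c) = push g c - push f c - prism f g (bd c) := by
  have : bd ∘ₗ prism f g = push g - push f - prism f g ∘ₗ (bd : ListChain F V →ₗ[F] _) := by
    refine hom_ext fun l => ?_
    induction l with
    | nil => simp [prismList, bdList]
    | cons v l ih =>
      simp only [LinearMap.coe_comp, Function.comp_apply, prism_single, LinearMap.sub_apply,
        push_single, bd_single] at ih ⊢
      simp only [prismList, map_sub, bd_single, bdList, bd_cone, ih, bdList_map, prism_single,
        prism_cone, List.map_cons, cone_single]
      abel
  exact LinearMap.congr_fun this c

theorem push_prism {U U' : Type*} (f g : V → W) (f' g' : U → U') (a : V → U) (b : W → U')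
    (hf : ∀ v, b (f v) = f' (a v)) (hg : ∀ v, b (g v) = g' (a v)) (c : ListChain F V) :
    push b (prism f g c) = prism f' g' (push a c) := by
  have : push b ∘ₗ prism f g = prism f' g' ∘ₗ (push a : ListChain F V →ₗ[F] _) := by
    refine hom_ext fun l => ?_
    simp only [LinearMap.coe_comp, Function.comp_apply, prism_single, push_single]
    induction l with
    | nil => simp [prismList]
    | cons v l ih =>
      simp [prismList, push_cone, ih, hf, hg, Function.comp_def]
  exact LinearMap.congr_fun this c

theorem cone_mem_supported {v : V} {S T : Set (List V)} (h : ∀ l ∈ S, v :: l ∈ T)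
    {c : ListChain F V} (hc : c ∈ Finsupp.supported F F S) :
    cone v c ∈ Finsupp.supported F F T :=
  map_mem_of_supported _ (fun l hl => by
    rw [cone_single]; exact Finsupp.single_mem_supported _ _ (h l hl)) hc

theorem bdList_mem_supported (l : List V) :
    bdList F l ∈ Finsupp.supported F F {l' | l'.length + 1 = l.length ∧ l' ⊆ l} := by
  induction l with
  | nil => simp [bdList]
  | cons v l ih =>
    refine Submodule.sub_mem _ (Finsupp.single_mem_supported _ _ (by simp)) ?_
    refine cone_mem_supported ?_ ih
    rintro l' ⟨h1, h2⟩
    refine ⟨by simpa using h1, ?_⟩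
    exact List.cons_subset_cons _ h2

theorem prismList_mem_supported (f g : V → W) (l : List V) :
    prismList F f g l ∈
      Finsupp.supported F F {l' | ∀ x ∈ l', ∃ v ∈ l, x = f v ∨ x = g v} := by
  induction l with
  | nil => simp [prismList]
  | cons v l ih =>
    refine Submodule.sub_mem _ (Finsupp.single_mem_supported _ _ ?_)
      (cone_mem_supported ?_ ih)
    · intro x hx
      simp only [List.mem_cons, List.mem_map] at hx
      rcases hx with rfl | rfl | ⟨a, ha, rfl⟩
      · exact ⟨v, by simp⟩
      · exact ⟨v, by simp⟩
      · exact ⟨a, by simp [ha]⟩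
    · intro l' hl' x hx
      rcases List.mem_cons.1 hx with rfl | hx
      · exact ⟨v, by simp⟩
      · obtain ⟨w, hw, h⟩ := hl' x hx
        exact ⟨w, by simp [hw], h⟩

end Algebra

section Affine

variable {F : Type*} [CommRing F] {E E' : Type*} [AddCommGroup E] [Module ℝ E]
  [AddCommGroup E'] [Module ℝ E']

/-- The chains all of whose simplices have their convex hull inside `U`. -/
def inside (F : Type*) [CommRing F] (U : Set E) : Submodule F (ListChain F E) :=
  Finsupp.supported F F {l | convexHull ℝ {x | x ∈ l} ⊆ U}

theorem single_mem_inside {U : Set E} {l : List E} (h : convexHull ℝ {x | x ∈ l} ⊆ U) (a : F) :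
    Finsupp.single l a ∈ inside F U :=
  Finsupp.single_mem_supported _ _ h

theorem inside_mono {U U' : Set E} (h : U ⊆ U') {c : ListChain F E} (hc : c ∈ inside F U) :
    c ∈ inside F U' :=
  Finsupp.supported_mono (fun _ hl => hl.trans h) hc

theorem mem_inside_inter {U U' : Set E} {c : ListChain F E} (h : c ∈ inside F U)
    (h' : c ∈ inside F U') : c ∈ inside F (U ∩ U') := by
  rw [inside, Finsupp.mem_supported] at *
  exact fun l hl => Set.subset_inter (h hl) (h' hl)

theorem convexHull_subset_of_subset_hull {l l' : List E}
    (h : ∀ x ∈ l', x ∈ convexHull ℝ {x | x ∈ l}) :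
    convexHull ℝ {x | x ∈ l'} ⊆ convexHull ℝ {x | x ∈ l} :=
  convexHull_min h (convex_convexHull ℝ _)

theorem bd_mem_inside {U : Set E} {c : ListChain F E} (h : c ∈ inside F U) :
    bd c ∈ inside F U := by
  refine map_mem_of_supported _ (fun l hl => ?_) h
  rw [bd_single]
  refine Finsupp.supported_mono ?_ (bdList_mem_supported l)
  rintro l' ⟨-, h'⟩
  exact (convexHull_mono h').trans hl

theorem convexHull_map (f : E →ᵃ[ℝ] E') (l : List E) :
    convexHull ℝ {x | x ∈ l.map f} = f '' convexHull ℝ {x | x ∈ l} := by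
  rw [AffineMap.image_convexHull]
  congr 1
  ext x
  simp

theorem push_mem_inside {U : Set E} {U' : Set E'} (f : E →ᵃ[ℝ] E') (hf : ∀ x ∈ U, f x ∈ U')
    {c : ListChain F E} (h : c ∈ inside F U) : push f c ∈ inside F U' := by
  refine map_mem_of_supported _ (fun l hl => ?_) h
  rw [push_single]
  refine single_mem_inside ?_ _
  rw [convexHull_map]
  rintro _ ⟨x, hx, rfl⟩
  exact hf x (hl hx)

theorem cone_mem_inside {U : Set E} {a : E} (ha : a ∈ U) (hU : StarConvex ℝ a U)
    {c : ListChain F E} (h : c ∈ inside F U) : cone a c ∈ inside F U := by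
  refine cone_mem_supported ?_ h
  intro l hl
  change convexHull ℝ {x | x ∈ a :: l} ⊆ U
  have : {x | x ∈ a :: l} = insert a {x | x ∈ l} := by ext; simp
  rw [this]
  rcases Set.eq_empty_or_nonempty {x | x ∈ l} with h0 | h0
  · rw [h0]; simpa using ha
  · rw [convexHull_insert h0]
    intro x hx
    rw [convexJoin_singleton_left] at hx
    simp only [Set.mem_iUnion] at hx
    obtain ⟨y, hy, hxy⟩ := hx
    exact hU.segment_subset (hl hy) hxy

/-- A cycle inside a star-shaped set bounds. -/
theorem exists_bd_of_starConvex {U : Set E} {a : E} (ha : a ∈ U) (hU : StarConvex ℝ a U)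
    {c : ListChain F E} (h : c ∈ inside F U) (hc : bd c = 0) :
    ∃ g ∈ inside F U, bd g = c :=
  ⟨cone a c, cone_mem_inside ha hU h, by simp [bd_cone, hc]⟩

theorem prism_mem_inside {U : Set E} {U' : Set E'} (f g : E →ᵃ[ℝ] E')
    (h : ∀ x y, segment ℝ x y ⊆ U → ∀ z ∈ segment ℝ (f x) (g y), z ∈ U')
    {c : ListChain F E} (hc : c ∈ inside F U) : prism f g c ∈ inside F U' := by
  refine map_mem_of_supported _ (fun l hl => ?_) hc
  rw [prism_single]
  refine Finsupp.supported_mono ?_ (prismList_mem_supported f g l)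
  intro l' hl'
  change convexHull ℝ {x | x ∈ l'} ⊆ U'
  rcases List.eq_nil_or_concat l with rfl | ⟨l₀, v₀, rfl⟩
  · have : {x | x ∈ l'} = ∅ := by
      ext x; simp only [Set.mem_ofPred_eq, Set.mem_empty_iff_false, iff_false]
      intro hx
      obtain ⟨v, hv, -⟩ := hl' x hx
      simp at hv
    rw [this]; simp
  set l := l₀.concat v₀ with hl0
  have hne : (convexHull ℝ {x | x ∈ l}).Nonempty := ⟨v₀, subset_convexHull _ _ (by simp [hl0])⟩
  have hsub : {x | x ∈ l'} ⊆ convexJoin ℝ (f '' convexHull ℝ {x | x ∈ l})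
      (g '' convexHull ℝ {x | x ∈ l}) := by
    intro x hx
    obtain ⟨v, hv, rfl | rfl⟩ := hl' x hx
    · exact subset_convexJoin_left (hne.image _) ⟨v, subset_convexHull _ _ hv, rfl⟩
    · exact subset_convexJoin_right (hne.image _) ⟨v, subset_convexHull _ _ hv, rfl⟩
  refine (convexHull_min hsub (Convex.convexJoin ((convex_convexHull ℝ _).affine_image f)
    ((convex_convexHull ℝ _).affine_image g))).trans ?_
  intro z hz
  rw [mem_convexJoin] at hz
  obtain ⟨_, ⟨x, hx, rfl⟩, _, ⟨y, hy, rfl⟩, hz⟩ := hz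
  exact h x y (((convex_convexHull ℝ _).segment_subset hx hy).trans hl) z hz

/-- The barycentre of a list of points. -/
noncomputable def bary (l : List E) : E := (l.length : ℝ)⁻¹ • l.sum

theorem bary_eq_sum (l : List E) :
    bary l = ∑ i : Fin l.length, (l.length : ℝ)⁻¹ • l[i] := by
  rw [bary, ← Finset.smul_sum]
  congr 1
  conv_lhs => rw [← List.ofFn_getElem (xs := l)]
  rw [List.sum_ofFn]
  rfl

theorem bary_mem {l : List E} (hl : l ≠ []) : bary l ∈ convexHull ℝ {x | x ∈ l} := by
  have hn : (l.length : ℝ) ≠ 0 := by simpa using hl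
  rw [bary_eq_sum]
  refine (convex_convexHull ℝ _).sum_mem (fun _ _ => by positivity) ?_ ?_
  · simp [hn]
  · intro i _
    exact subset_convexHull _ _ (by simp)

theorem bary_map (f : E →ᵃ[ℝ] E') {l : List E} (hl : l ≠ []) :
    bary (l.map f) = f (bary l) := by
  have hn : (l.length : ℝ) ≠ 0 := by simpa using hl
  have hsum : ∀ l : List E, (l.map f).sum = f.linear l.sum + (l.length : ℝ) • f 0 := by
    intro l
    induction l with
    | nil => simp
    | cons v l ih =>
      have := congrFun f.decomp v
      simp only [Pi.add_apply] at this
      simp only [List.map_cons, List.sum_cons, ih, this, map_add, List.length_cons]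
      push_cast
      module
  have := congrFun f.decomp (bary l)
  simp only [Pi.add_apply] at this
  rw [this]
  simp only [bary, hsum, List.length_map, smul_add, map_smul, smul_smul]
  simp [hn]

/-- Auxiliary recursion on dimension for operators defined by coning off from barycentres. -/
noncomputable def baryConeAux (base t s : F) : ℕ → List E → ListChain F E
  | 0, _ => Finsupp.single [] base
  | n + 1, l => cone (bary l) (Finsupp.single l t +
      s • Finsupp.linearCombination F (baryConeAux base t s n) (bdList F l))

/-- The operator `Q` with `Q [] = base • []` and `Q l = cone (bary l) (t • l + s • Q (∂ l))`. -/
noncomputable def baryCone (base t s : F) : ListChain F E →ₗ[F] ListChain F E :=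
  Finsupp.linearCombination F fun l => baryConeAux base t s l.length l

theorem baryCone_nil (base t s : F) :
    baryCone base t s (Finsupp.single ([] : List E) 1) = Finsupp.single [] base := by
  simp [baryCone, baryConeAux]

theorem baryCone_single (base t s : F) {l : List E} (hl : l ≠ []) :
    baryCone base t s (Finsupp.single l 1) =
      cone (bary l) (Finsupp.single l t + s • baryCone base t s (bdList F l)) := by
  obtain ⟨v, m, rfl⟩ := List.exists_cons_of_ne_nil hl
  have : Finsupp.linearCombination F (baryConeAux base t s m.length) (bdList F (v :: m)) =
      baryCone base t s (bdList F (v :: m)) := by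
    refine map_eq_of_supported _ _ ?_ (bdList_mem_supported (v :: m))
    rintro l' ⟨h, -⟩
    have h' : l'.length = m.length := by simpa using h
    simp [baryCone, h']
  conv_lhs => simp only [baryCone, Finsupp.linearCombination_single, List.length_cons,
    baryConeAux, one_smul, this]
  rfl

theorem length_induction {V : Type*} {P : List V → Prop} (h : ∀ l, (∀ l', l'.length < l.length → P l') → P l)
    (l : List V) : P l := by
  induction hn : l.length using Nat.strong_induction_on generalizing l with
  | _ n ih => exact h l fun l' hl' => ih _ (hn ▸ hl') l' rfl

theorem baryCone_mem_supported (base t s : F) (l : List E) :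
    baryCone base t s (Finsupp.single l 1) ∈
      Finsupp.supported F F {l' | ∀ x ∈ l', x ∈ convexHull ℝ {x | x ∈ l}} := by
  induction l using length_induction with
  | h l ih =>
    rcases eq_or_ne l [] with rfl | hl
    · rw [baryCone_nil]
      exact Finsupp.single_mem_supported _ _ (by simp)
    rw [baryCone_single _ _ _ hl]
    refine cone_mem_supported (S := {l' | ∀ x ∈ l', x ∈ convexHull ℝ {x | x ∈ l}}) ?_ ?_
    · intro l' hl' x hx
      rcases List.mem_cons.1 hx with rfl | hx
      · exact bary_mem hl
      · exact hl' x hx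
    refine Submodule.add_mem _ (Finsupp.single_mem_supported _ _
      fun x hx => subset_convexHull _ _ hx) (Submodule.smul_mem _ _ ?_)
    refine map_mem_of_supported _ ?_ (bdList_mem_supported l)
    rintro l' ⟨h1, h2⟩
    refine Finsupp.supported_mono ?_ (ih l' (by omega))
    exact fun l'' h x hx => convexHull_mono h2 (h x hx)

theorem baryCone_mem_inside (base t s : F) {U : Set E} {c : ListChain F E}
    (hc : c ∈ inside F U) : baryCone base t s c ∈ inside F U := by
  refine map_mem_of_supported _ (fun l hl => ?_) hc
  refine Finsupp.supported_mono ?_ (baryCone_mem_supported base t s l)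
  exact fun l' h => (convexHull_subset_of_subset_hull h).trans hl

/-- Barycentric subdivision. -/
noncomputable def sd : ListChain F E →ₗ[F] ListChain F E := baryCone 1 0 1

theorem sd_single {l : List E} (hl : l ≠ []) :
    sd (Finsupp.single l (1 : F)) = cone (bary l) (sd (bdList F l)) := by
  simp [sd, baryCone_single _ _ _ hl]

theorem bd_sd (c : ListChain F E) : bd (sd c) = sd (bd c) := by
  have : bd ∘ₗ sd = sd ∘ₗ (bd : ListChain F E →ₗ[F] _) := by
    refine hom_ext fun l => ?_
    simp only [LinearMap.coe_comp, Function.comp_apply, bd_single]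
    induction l using length_induction with
    | h l ih =>
      rcases eq_or_ne l [] with rfl | hl
      · simp [sd, baryCone_nil, bdList]
      rw [sd_single hl, bd_cone]
      have : bd (sd (bdList F l)) = sd (bd (bdList F l)) := by
        refine map_eq_of_supported (bd ∘ₗ (sd : ListChain F E →ₗ[F] ListChain F E)) (sd ∘ₗ bd) ?_ (bdList_mem_supported l)
        rintro l' ⟨h1, -⟩
        simpa using ih l' (by omega)
      rw [this, bd_bdList]
      simp
  exact LinearMap.congr_fun this c

theorem exists_sub_sd {U : Set E} {c : ListChain F E} (hc : c ∈ inside F U) (h : bd c = 0) :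
    ∃ g ∈ inside F U, c - sd c = bd g := by
  have key : (bd ∘ₗ baryCone 0 1 (-1) : ListChain F E →ₗ[F] _) =
      LinearMap.id - sd - baryCone 0 1 (-1) ∘ₗ bd := by
    refine hom_ext fun l => ?_
    simp only [LinearMap.coe_comp, Function.comp_apply, bd_single, LinearMap.sub_apply,
      LinearMap.id_apply]
    induction l using length_induction with
    | h l ih =>
      rcases eq_or_ne l [] with rfl | hl
      · simp [sd, baryCone_nil, bdList]
      rw [sd_single hl, baryCone_single _ _ _ hl, bd_cone]
      have : bd (baryCone 0 1 (-1) (bdList F l)) =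
          bdList F l - sd (bdList F l) - baryCone 0 1 (-1) (bd (bdList F l)) := by
        refine map_eq_of_supported
          (bd ∘ₗ (baryCone 0 1 (-1) : ListChain F E →ₗ[F] ListChain F E))
          (LinearMap.id - sd - baryCone 0 1 (-1) ∘ₗ bd) ?_ (bdList_mem_supported l)
        rintro l' ⟨h1, -⟩
        simpa using ih l' (by omega)
      simp only [map_add, map_smul, this, bd_bdList, bd_single]
      simp
      abel
  refine ⟨baryCone 0 1 (-1) c, baryCone_mem_inside _ _ _ hc, ?_⟩
  have := LinearMap.congr_fun key c
  simp only [LinearMap.coe_comp, Function.comp_apply, LinearMap.sub_apply,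
      LinearMap.id_apply, h, map_zero, sub_zero] at this
  exact this.symm

theorem push_sd (f : E →ᵃ[ℝ] E') (c : ListChain F E) : push f (sd c) = sd (push f c) := by
  have : push f ∘ₗ sd = sd ∘ₗ (push f : ListChain F E →ₗ[F] _) := by
    refine hom_ext fun l => ?_
    simp only [LinearMap.coe_comp, Function.comp_apply, push_single]
    induction l using length_induction with
    | h l ih =>
      rcases eq_or_ne l [] with rfl | hl
      · simp [sd, baryCone_nil]
      rw [sd_single hl, sd_single (by simpa using hl), push_cone, bary_map f hl, bdList_map]
      congr 1
      refine map_eq_of_supported (push f ∘ₗ (sd : ListChain F E →ₗ[F] ListChain F E))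
        (sd ∘ₗ push f) ?_ (bdList_mem_supported l)
      rintro l' ⟨h1, -⟩
      simpa using ih l' (by omega)
  exact LinearMap.congr_fun this c

theorem bd_sd_iterate (n : ℕ) (c : ListChain F E) : bd (sd^[n] c) = sd^[n] (bd c) :=
  (Function.Commute.iterate_right (f := bd) (g := sd) bd_sd n) c

theorem push_sd_iterate (f : E →ᵃ[ℝ] E') (n : ℕ) (c : ListChain F E) :
    push f (sd^[n] c) = sd^[n] (push f c) :=
  (Function.Semiconj.iterate_right (f := push f) (ga := sd) (gb := sd) (push_sd f) n) c

theorem sd_iterate_mem_inside {U : Set E} {c : ListChain F E} (hc : c ∈ inside F U) (n : ℕ) :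
    sd^[n] c ∈ inside F U := by
  induction n with
  | zero => exact hc
  | succ n ih => rw [Function.iterate_succ_apply']; exact baryCone_mem_inside _ _ _ ih

theorem sd_iterate_eq_pow (n : ℕ) (c : ListChain F E) : sd^[n] c = (sd ^ n) c :=
  (Module.End.pow_apply _ _ _).symm

theorem exists_sub_sd_iterate {U : Set E} {c : ListChain F E} (hc : c ∈ inside F U)
    (h : bd c = 0) (n : ℕ) : ∃ g ∈ inside F U, c - sd^[n] c = bd g := by
  induction n with
  | zero => exact ⟨0, Submodule.zero_mem _, by simp⟩
  | succ n ih =>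
    obtain ⟨g, hg, e⟩ := ih
    obtain ⟨g', hg', e'⟩ := exists_sub_sd (sd_iterate_mem_inside hc n)
      (by rw [bd_sd_iterate, h, sd_iterate_eq_pow, map_zero])
    refine ⟨g + g', Submodule.add_mem _ hg hg', ?_⟩
    rw [Function.iterate_succ_apply', map_add, ← e, ← e']
    abel

end Affine

section Mesh

variable {F : Type*} [CommRing F] {E : Type*} [NormedAddCommGroup E] [NormedSpace ℝ E]

theorem dist_bary_le {l : List E} {v : E} (hv : v ∈ l) {δ : ℝ}
    (h : ∀ x ∈ l, ∀ y ∈ l, dist x y ≤ δ) : dist (bary l) v ≤ (1 - (l.length : ℝ)⁻¹) * δ := by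
  have hl : l ≠ [] := List.ne_nil_of_mem hv
  have hn : (l.length : ℝ) ≠ 0 := by simpa using hl
  obtain ⟨i₀, hi₀, rfl⟩ := List.getElem_of_mem hv
  have e : bary l - l[i₀] = ∑ i : Fin l.length, (l.length : ℝ)⁻¹ • (l[i] - l[i₀]) := by
    simp only [smul_sub, Finset.sum_sub_distrib, ← bary_eq_sum]
    simp [← Nat.cast_smul_eq_nsmul ℝ, smul_smul, hn]
  rw [dist_eq_norm, e]
  refine (norm_sum_le _ _).trans ?_
  rw [← Finset.add_sum_erase _ _ (Finset.mem_univ (⟨i₀, hi₀⟩ : Fin l.length))]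
  have : ∀ i ∈ Finset.univ.erase (⟨i₀, hi₀⟩ : Fin l.length),
      ‖(l.length : ℝ)⁻¹ • (l[i] - l[i₀])‖ ≤ (l.length : ℝ)⁻¹ * δ := by
    intro i _
    rw [norm_smul, Real.norm_of_nonneg (by positivity), ← dist_eq_norm]
    gcongr
    exact h _ (by simp) _ (by simp)
  refine (add_le_add_right (Finset.sum_le_card_nsmul _ _ _ this) _).trans ?_
  simp only [Finset.card_erase_of_mem (Finset.mem_univ _), Finset.card_univ, Fintype.card_fin]
  have h1 : 1 ≤ l.length := List.length_pos_of_ne_nil hl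
  simp [nsmul_eq_mul, Nat.cast_sub h1]
  apply le_of_eq
  field_simp

theorem sd_mem_supported_mesh {M : ℕ} {δ : ℝ} (hδ : 0 ≤ δ) {l : List E} (hM : l.length ≤ M)
    (h : ∀ x ∈ l, ∀ y ∈ l, dist x y ≤ δ) :
    sd (Finsupp.single l (1 : F)) ∈ Finsupp.supported F F {l' | l'.length = l.length ∧
      (∀ x ∈ l', x ∈ convexHull ℝ {x | x ∈ l}) ∧
      ∀ x ∈ l', ∀ y ∈ l', dist x y ≤ (1 - (M : ℝ)⁻¹) * δ} := by
  induction l using length_induction with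
  | h l ih =>
    rcases eq_or_ne l [] with rfl | hl
    · rw [sd, baryCone_nil]
      exact Finsupp.single_mem_supported _ _ (by simp)
    have hpos : (0 : ℝ) < l.length := by
      exact_mod_cast List.length_pos_of_ne_nil hl
    have hM' : (l.length : ℝ) ≤ M := by exact_mod_cast hM
    have hM1 : (1 : ℝ) ≤ M := by
      have := List.length_pos_of_ne_nil hl
      exact_mod_cast (by omega : 1 ≤ M)
    have hnn : 0 ≤ (1 - (M : ℝ)⁻¹) * δ := mul_nonneg (by
      rw [sub_nonneg]; exact inv_le_one_of_one_le₀ hM1) hδ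
    have hball : convexHull ℝ {x | x ∈ l} ⊆ Metric.closedBall (bary l) ((1 - (M : ℝ)⁻¹) * δ) := by
      refine convexHull_min (fun v hv => ?_) (convex_closedBall _ _)
      rw [Metric.mem_closedBall, dist_comm]
      refine (dist_bary_le hv h).trans ?_
      gcongr
    rw [sd_single hl]
    refine cone_mem_supported (S := {l' | l'.length + 1 = l.length ∧
      (∀ x ∈ l', x ∈ convexHull ℝ {x | x ∈ l}) ∧
      ∀ x ∈ l', ∀ y ∈ l', dist x y ≤ (1 - (M : ℝ)⁻¹) * δ}) ?_ ?_
    · rintro l' ⟨h1, h2, h3⟩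
      refine ⟨by simpa using h1, ?_, ?_⟩
      · intro x hx
        rcases List.mem_cons.1 hx with rfl | hx
        · exact bary_mem hl
        · exact h2 x hx
      · intro x hx y hy
        rcases List.mem_cons.1 hx with rfl | hx <;> rcases List.mem_cons.1 hy with rfl | hy
        · simpa using hnn
        · rw [dist_comm]; exact hball (h2 y hy)
        · exact hball (h2 x hx)
        · exact h3 x hx y hy
    · refine map_mem_of_supported _ ?_ (bdList_mem_supported l)
      rintro l' ⟨h1, h2⟩
      refine Finsupp.supported_mono ?_ (ih l' (by omega) (by omega)
        fun x hx y hy => h x (h2 hx) y (h2 hy))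
      rintro l'' ⟨k1, k2, k3⟩
      exact ⟨by omega, fun x hx => convexHull_mono h2 (k2 x hx), k3⟩

theorem sd_iterate_mem_supported_mesh {δ : ℝ} (hδ : 0 ≤ δ) {l : List E} (hl : l ≠ [])
    (h : ∀ x ∈ l, ∀ y ∈ l, dist x y ≤ δ) (n : ℕ) :
    sd^[n] (Finsupp.single l (1 : F)) ∈ Finsupp.supported F F {l' | l'.length = l.length ∧
      (∀ x ∈ l', x ∈ convexHull ℝ {x | x ∈ l}) ∧
      ∀ x ∈ l', ∀ y ∈ l', dist x y ≤ (1 - (l.length : ℝ)⁻¹) ^ n * δ} := by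
  have hM1 : (1 : ℝ) ≤ l.length := by exact_mod_cast List.length_pos_of_ne_nil hl
  induction n with
  | zero =>
    exact Finsupp.single_mem_supported _ _ ⟨rfl, fun x hx => subset_convexHull _ _ hx,
      by simpa using h⟩
  | succ n ih =>
    rw [Function.iterate_succ_apply']
    refine map_mem_of_supported _ ?_ ih
    rintro l' ⟨h1, h2, h3⟩
    refine Finsupp.supported_mono ?_ (sd_mem_supported_mesh (mul_nonneg (pow_nonneg
      (by rw [sub_nonneg]; exact inv_le_one_of_one_le₀ hM1) n) hδ) h1.le h3)
    rintro l'' ⟨k1, k2, k3⟩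
    refine ⟨by omega, fun x hx => convexHull_subset_of_subset_hull h2 (k2 x hx), ?_⟩
    intro x hx y hy
    refine (k3 x hx y hy).trans (le_of_eq ?_)
    ring

/-- Iterated subdivision makes a chain small with respect to an open cover. -/
theorem exists_sd_iterate_small {U : Set E} {ι : Type*} (O : ι → Set E)
    (hO : ∀ i, IsOpen (O i)) (hU : U ⊆ ⋃ i, O i) {c : ListChain F E} (hc : c ∈ inside F U) :
    ∃ n₀, ∀ n ≥ n₀, sd^[n] c ∈ Finsupp.supported F F
      {l | convexHull ℝ {x | x ∈ l} ⊆ U ∧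
        (l = [] ∨ ∃ i, convexHull ℝ {x | x ∈ l} ⊆ O i)} := by
  rw [inside, Finsupp.supported_eq_span_single] at hc
  induction hc using Submodule.span_induction with
  | zero => exact ⟨0, fun n _ => by rw [sd_iterate_eq_pow, map_zero]; exact Submodule.zero_mem _⟩
  | add x y _ _ hx hy =>
    obtain ⟨n, hn⟩ := hx
    obtain ⟨m, hm⟩ := hy
    refine ⟨max n m, fun k hk => ?_⟩
    have h1 := hn k (le_of_max_le_left hk)
    have h2 := hm k (le_of_max_le_right hk)
    rw [sd_iterate_eq_pow] at *
    rw [map_add]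
    exact Submodule.add_mem _ h1 h2
  | smul a x _ hx =>
    obtain ⟨n, hn⟩ := hx
    refine ⟨n, fun k hk => ?_⟩
    have h1 := hn k hk
    rw [sd_iterate_eq_pow] at *
    rw [map_smul]
    exact Submodule.smul_mem _ _ h1
  | mem x hx =>
    obtain ⟨l, hl, rfl⟩ := hx
    rcases eq_or_ne l [] with rfl | hne
    · refine ⟨0, fun n _ => ?_⟩
      have : ∀ n, sd^[n] (Finsupp.single ([] : List E) (1 : F)) = Finsupp.single [] 1 := by
        intro n
        induction n with
        | zero => rfl
        | succ n ih => rw [Function.iterate_succ_apply', ih, sd, baryCone_nil]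
      rw [this]
      exact Finsupp.single_mem_supported _ _ ⟨by simp, Or.inl rfl⟩
    have hcpt : IsCompact (convexHull ℝ {x | x ∈ l}) :=
      (List.finite_toSet l).isCompact_convexHull ℝ
    obtain ⟨δ, hδ, hleb⟩ := lebesgue_number_lemma_of_metric hcpt hO (hl.trans hU)
    set D := Metric.diam {x | x ∈ l}
    have hM1 : (1 : ℝ) ≤ l.length := by exact_mod_cast List.length_pos_of_ne_nil hne
    have hlim : Filter.Tendsto (fun n : ℕ => (1 - (l.length : ℝ)⁻¹) ^ n * D) Filter.atTop
        (nhds (0 * D)) := by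
      refine (tendsto_pow_atTop_nhds_zero_of_lt_one ?_ ?_).mul_const D
      · rw [sub_nonneg]; exact inv_le_one_of_one_le₀ hM1
      · have : (0 : ℝ) < (l.length : ℝ)⁻¹ := by positivity
        linarith
    rw [zero_mul] at hlim
    obtain ⟨n₀, hn₀⟩ := Filter.eventually_atTop.1 (hlim.eventually_lt_const hδ)
    refine ⟨n₀, fun n hn => ?_⟩
    refine Finsupp.supported_mono ?_ (sd_iterate_mem_supported_mesh (δ := D) Metric.diam_nonneg hne
      (fun x hx y hy => Metric.dist_le_diam_of_mem (List.finite_toSet l).isBounded hx hy) n)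
    rintro l' ⟨k1, k2, k3⟩
    refine ⟨(convexHull_subset_of_subset_hull k2).trans hl, Or.inr ?_⟩
    have hne' : l' ≠ [] := by
      rintro rfl
      exact hne (List.length_eq_zero_iff.1 k1.symm)
    obtain ⟨v, m, rfl⟩ := List.exists_cons_of_ne_nil hne'
    obtain ⟨i, hi⟩ := hleb v (k2 v (by simp))
    refine ⟨i, (convexHull_min ?_ (convex_ball v δ)).trans hi⟩
    intro x hx
    exact (k3 x hx v (by simp)).trans_lt (hn₀ n hn)

end Mesh

section Local

variable {F : Type*} [CommRing F]

/-- Translation by `a`, as an affine map. -/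
noncomputable def trans {E : Type*} [AddCommGroup E] [Module ℝ E] (a : E) : E →ᵃ[ℝ] E :=
  AffineMap.id ℝ E + AffineMap.const ℝ E a

@[simp] theorem trans_apply {E : Type*} [AddCommGroup E] [Module ℝ E] (a x : E) :
    trans a x = x + a := by
  simp [trans]

variable {ι : Type*} [DecidableEq ι]

/-- Replace the `j`-th coordinate by zero. -/
def killCoord (j : ι) : (ι → ℝ) →ₗ[ℝ] (ι → ℝ) where
  toFun x := Function.update x j 0
  map_add' x y := by
    ext i
    by_cases h : i = j
    · subst h; simp
    · simp [h]
  map_smul' a x := by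
    ext i
    by_cases h : i = j
    · subst h; simp
    · simp [h]

theorem killCoord_apply (j : ι) (x : ι → ℝ) : killCoord j x = Function.update x j 0 := rfl

@[simp] theorem killCoord_single (j : ι) (a : ℝ) : killCoord j (Pi.single j a) = 0 := by
  ext i
  by_cases h : i = j
  · subst h; simp [killCoord_apply]
  · simp [killCoord_apply, h]

/-- The subspace of vectors supported on the coordinates in `s`. -/
def coordSpace (s : Finset ι) : Submodule ℝ (ι → ℝ) where
  carrier := {x | ∀ i ∉ s, x i = 0}
  add_mem' hx hy i hi := by simp [hx i hi, hy i hi]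
  zero_mem' _ _ := rfl
  smul_mem' a x hx i hi := by simp [hx i hi]

theorem killCoord_eq_self {s : Finset ι} {j : ι} (hj : j ∉ s) {x : ι → ℝ}
    (hx : x ∈ coordSpace s) : killCoord j x = x := by
  rw [killCoord_apply, Function.update_eq_self_iff]
  exact (hx j hj).symm

theorem killCoord_mem {s : Finset ι} {j : ι} {x : ι → ℝ} (hx : x ∈ coordSpace (insert j s)) :
    killCoord j x ∈ coordSpace s := by
  intro i hi
  by_cases h : i = j
  · subst h; simp [killCoord_apply]
  · simpa [killCoord_apply, h] using hx i (by simp [h, hi])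

theorem coordSpace_le_insert (s : Finset ι) (j : ι) : coordSpace s ≤ coordSpace (insert j s) :=
  fun _ hx i hi => hx i fun h => hi (Finset.mem_insert_of_mem h)

theorem single_mem_coordSpace (s : Finset ι) (j : ι) (a : ℝ) :
    (Pi.single j a : ι → ℝ) ∈ coordSpace (insert j s) := by
  intro i hi
  simp only [Finset.mem_insert, not_or] at hi
  simp [hi.1]

/-- The points of a coordinate space away from the half-line opposite to `ε • e_j`. -/
def slit (s : Finset ι) (j : ι) (ε : ℝ) : Set (ι → ℝ) :=
  {x | x ∈ coordSpace (insert j s) ∧ (killCoord j x ≠ 0 ∨ 0 < ε * x j)}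

theorem single_mem_slit (s : Finset ι) (j : ι) {ε : ℝ} (hε : ε ≠ 0) :
    Pi.single j ε ∈ slit s j ε :=
  ⟨single_mem_coordSpace s j ε, Or.inr (by simpa using mul_self_pos.2 hε)⟩

theorem starConvex_slit (s : Finset ι) (j : ι) {ε : ℝ} (hε : ε ≠ 0) :
    StarConvex ℝ (Pi.single j ε) (slit s j ε) := by
  rintro x ⟨hx, hx'⟩ a b ha hb hab
  refine ⟨add_mem (Submodule.smul_mem _ _ (single_mem_coordSpace s j ε))
    (Submodule.smul_mem _ _ hx), ?_⟩
  have hε2 := mul_self_pos.2 hε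
  rcases hb.eq_or_lt with rfl | hb
  · right
    have : a = 1 := by linarith
    simpa [this] using hε2
  rcases hx' with h | h
  · left
    simp [h, hb.ne']
  · right
    simp only [Pi.add_apply, Pi.smul_apply, Pi.single_eq_same, smul_eq_mul]
    have : ε * (a * ε + b * x j) = a * (ε * ε) + b * (ε * x j) := by ring
    rw [this]
    positivity

theorem slit_subset (s : Finset ι) (j : ι) (ε : ℝ) :
    slit s j ε ⊆ (coordSpace (insert j s) : Set (ι → ℝ)) \ {0} := by
  rintro x ⟨hx, h⟩
  refine ⟨hx, ?_⟩
  rintro rfl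
  simp at h

/-- Differences of opposite faces of boundaries of cubes in the coordinates `s`. -/
noncomputable def oppositeFaces (F : Type*) [CommRing F] (s : Finset ι) :
    Submodule F (ListChain F (ι → ℝ)) :=
  Submodule.span F {c | ∃ j ∈ s, ∃ l : List (ι → ℝ), (∀ v ∈ l, v j = 0) ∧
    c = push (trans (Pi.single j 1)) (Finsupp.single l 1) -
      push (trans (Pi.single j (-1))) (Finsupp.single l 1)}

theorem sub_mem_oppositeFaces {s : Finset ι} {j : ι} (hj : j ∈ s) {c : ListChain F (ι → ℝ)}
    (hc : c ∈ Finsupp.supported F F {l : List (ι → ℝ) | ∀ v ∈ l, v j = 0}) :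
    push (trans (Pi.single j 1)) c - push (trans (Pi.single j (-1))) c ∈ oppositeFaces F s :=
  map_mem_of_supported (N := oppositeFaces F s) (push (trans (Pi.single j 1)) -
      (push (trans (Pi.single j (-1))) : ListChain F (ι → ℝ) →ₗ[F] ListChain F (ι → ℝ)))
    (fun l hl => Submodule.subset_span ⟨j, hj, l, hl, rfl⟩) hc

theorem prism_mem_oppositeFaces {s : Finset ι} {j : ι} (hj : j ∉ s) (a b : ℝ)
    {c : ListChain F (ι → ℝ)} (hc : c ∈ oppositeFaces F s) :
    prism (trans (Pi.single j a)) (trans (Pi.single j b)) c ∈ oppositeFaces F (insert j s) := by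
  refine (Submodule.span_le (p := (oppositeFaces F (insert j s)).comap (prism _ _))).2 ?_ hc
  rintro _ ⟨i, hi, l, hl, rfl⟩
  have hij : i ≠ j := fun h => hj (h ▸ hi)
  rw [SetLike.mem_coe, Submodule.mem_comap, map_sub]
  have key : ∀ t : ℝ, prism (trans (Pi.single j a)) (trans (Pi.single j b))
      (push (trans (Pi.single i t)) (Finsupp.single l (1 : F))) =
      push (trans (Pi.single i t)) (prism (trans (Pi.single j a)) (trans (Pi.single j b))
        (Finsupp.single l (1 : F))) := fun t => by
    rw [push_prism]
    · intro v; simp [add_right_comm]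
    · intro v; simp [add_right_comm]
  rw [key, key]
  refine sub_mem_oppositeFaces (Finset.mem_insert_of_mem hi) ?_
  rw [prism_single]
  refine Finsupp.supported_mono ?_ (prismList_mem_supported _ _ l)
  intro l' hl' x hx
  obtain ⟨v, hv, rfl | rfl⟩ := hl' x hx <;> simp [hl v hv, hij]

theorem push_sd_iterate_eq_zero {s : Finset ι} {W : Type*} {φ : (ι → ℝ) → W}
    (hφ : ∀ j ∈ s, ∀ v : ι → ℝ, v j = 0 → φ (v + Pi.single j 1) = φ (v + Pi.single j (-1)))
    {c : ListChain F (ι → ℝ)} (hc : c ∈ oppositeFaces F s) (n : ℕ) :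
    push φ (sd^[n] c) = 0 := by
  rw [sd_iterate_eq_pow]
  refine (Submodule.span_le (p := LinearMap.ker (push φ ∘ₗ
    (sd : Module.End F (ListChain F (ι → ℝ))) ^ n))).2 ?_ hc
  rintro _ ⟨j, hj, l, hl, rfl⟩
  simp only [SetLike.mem_coe, LinearMap.mem_ker, LinearMap.comp_apply, map_sub]
  simp only [← sd_iterate_eq_pow, ← push_sd_iterate, push_push, sub_eq_zero]
  have hin : (Finsupp.single l 1 : ListChain F (ι → ℝ)) ∈ inside F {v : ι → ℝ | v j = 0} := by
    refine single_mem_inside (convexHull_min hl ?_) 1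
    exact (LinearMap.ker (LinearMap.proj j : (ι → ℝ) →ₗ[ℝ] ℝ)).convex
  refine map_eq_of_supported _ _ ?_ (sd_iterate_mem_inside hin n)
  intro m hm
  rw [push_single, push_single]
  congr 1
  refine List.map_congr_left fun v hv => ?_
  simpa using hφ j hj v (hm (subset_convexHull _ _ hv))

/-- Splitting a chain that is small with respect to two sets. -/
theorem exists_add_of_small {E : Type*} [AddCommGroup E] [Module ℝ E] {U : Set E}
    {O : Bool → Set E} {c : ListChain F E} (hc : c ∈ Finsupp.supported F F
      {l | convexHull ℝ {x | x ∈ l} ⊆ U ∧ (l = [] ∨ ∃ i, convexHull ℝ {x | x ∈ l} ⊆ O i)}) :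
    ∃ c₁ ∈ inside F (U ∩ O true), ∃ c₂ ∈ inside F (U ∩ O false), c = c₁ + c₂ := by
  have hc' : c ∈ inside F (U ∩ O true) ⊔ inside F (U ∩ O false) := by
    rw [inside, inside, ← Finsupp.supported_union]
    refine Finsupp.supported_mono ?_ hc
    rintro l ⟨hl, rfl | ⟨i, hi⟩⟩
    · left; simp
    · cases i
      · exact Or.inr (Set.subset_inter hl hi)
      · exact Or.inl (Set.subset_inter hl hi)
  obtain ⟨c₁, h₁, c₂, h₂, e⟩ := Submodule.mem_sup.1 hc'
  exact ⟨c₁, h₁, c₂, h₂, e.symm⟩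

variable [Fintype ι]

/-- Gluing step: the two halves of a punctured coordinate space. -/
theorem exists_eq_cone_sub_cone {s : Finset ι} {j : ι} (hj : j ∉ s) {b : ListChain F (ι → ℝ)}
    (hb : b ∈ inside F ((coordSpace s : Set (ι → ℝ)) \ {0})) (hb0 : bd b = 0)
    (hgen : ∀ z ∈ inside F ((coordSpace s : Set (ι → ℝ)) \ {0}), bd z = 0 →
      ∃ a : F, ∃ g ∈ inside F ((coordSpace s : Set (ι → ℝ)) \ {0}), z = a • b + bd g)
    {z : ListChain F (ι → ℝ)}
    (hz : z ∈ inside F ((coordSpace (insert j s) : Set (ι → ℝ)) \ {0})) (hz0 : bd z = 0) :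
    ∃ a : F, ∃ g ∈ inside F ((coordSpace (insert j s) : Set (ι → ℝ)) \ {0}),
      z = a • (cone (Pi.single j 1) b - cone (Pi.single j (-1)) b) + bd g := by
  set V : Set (ι → ℝ) := {x | x ∈ coordSpace (insert j s) ∧ killCoord j x ≠ 0} with hV
  have hbV : inside F ((coordSpace s : Set (ι → ℝ)) \ {0}) ≤ inside F V := by
    refine fun c => inside_mono ?_
    rintro x ⟨hx, hx0⟩
    exact ⟨coordSpace_le_insert s j hx, by rwa [killCoord_eq_self hj hx]⟩
  have hVslit : ∀ ε, V ⊆ slit s j ε := fun ε x hx => ⟨hx.1, Or.inl hx.2⟩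
  have hcontk : Continuous (killCoord j : (ι → ℝ) → ι → ℝ) :=
    continuous_id.update j continuous_const
  let O : Bool → Set (ι → ℝ) := fun i => {x | killCoord j x ≠ 0 ∨ 0 < (bif i then 1 else -1) * x j}
  have hO : ∀ i, IsOpen (O i) := fun i =>
    (isOpen_ne_fun hcontk continuous_const).union
      (isOpen_lt continuous_const (continuous_const.mul (continuous_apply j)))
  have hcov : (coordSpace (insert j s) : Set (ι → ℝ)) \ {0} ⊆ ⋃ i, O i := by
    rintro x ⟨-, hx0⟩
    by_cases h : killCoord j x = 0
    · have hxj : x j ≠ 0 := by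
        intro hxj
        apply hx0
        rw [← h, killCoord_apply, ← hxj, Function.update_eq_self]
        rfl
      rcases lt_or_gt_of_ne hxj with h | h
      · exact Set.mem_iUnion.2 ⟨false, Or.inr (by simpa using h)⟩
      · exact Set.mem_iUnion.2 ⟨true, Or.inr (by simpa using h)⟩
    · exact Set.mem_iUnion.2 ⟨true, Or.inl h⟩
  obtain ⟨n, hn⟩ := exists_sd_iterate_small O hO hcov hz
  obtain ⟨g₀, hg₀, e₀⟩ := exists_sub_sd_iterate hz hz0 n
  obtain ⟨z₁, hz₁, z₂, hz₂, e⟩ := exists_add_of_small (hn n le_rfl)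
  replace hz₁ : z₁ ∈ inside F (slit s j 1) := 
    inside_mono (by rintro x ⟨hx, hx'⟩; exact ⟨hx.1, hx'⟩) hz₁
  replace hz₂ : z₂ ∈ inside F (slit s j (-1)) := 
    inside_mono (by rintro x ⟨hx, hx'⟩; exact ⟨hx.1, hx'⟩) hz₂
  have hsum : bd z₁ + bd z₂ = 0 := by
    rw [← map_add, ← e, bd_sd_iterate, hz0, sd_iterate_eq_pow, map_zero]
  have hw : bd z₁ ∈ inside F V := by
    refine inside_mono ?_ (mem_inside_inter (bd_mem_inside hz₁) (?_ : bd z₁ ∈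
      inside F (slit s j (-1))))
    · rintro x ⟨⟨h1, h2⟩, -, h3⟩
      refine ⟨h1, ?_⟩
      rcases h2 with h2 | h2
      · exact h2
      rcases h3 with h3 | h3
      · exact h3
      linarith
    · rw [eq_neg_of_add_eq_zero_left hsum]
      exact Submodule.neg_mem _ (bd_mem_inside hz₂)
  obtain ⟨a, g, hg, hag⟩ := hgen (push (killCoord j) (bd z₁))
    (push_mem_inside (killCoord j).toAffineMap (by rintro x ⟨hx, hx'⟩; exact ⟨killCoord_mem hx, hx'⟩) hw)
    (by rw [bd_push, bd_bd, map_zero])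
  have hprism : prism (killCoord j) id (bd z₁) ∈ inside F V := by
    refine prism_mem_inside (killCoord j).toAffineMap (AffineMap.id ℝ _) ?_ hw
    rintro x y hxy _ ⟨t, u, ht, hu, htu, rfl⟩
    have hx := (hxy (left_mem_segment ℝ x y)).1
    have hy := (hxy (right_mem_segment ℝ x y)).1
    have h := (hxy ⟨t, u, ht, hu, htu, rfl⟩).2
    refine ⟨add_mem (Submodule.smul_mem _ _ (coordSpace_le_insert s j (killCoord_mem hx)))
      (Submodule.smul_mem _ _ hy), ?_⟩
    simpa [killCoord_eq_self hj (killCoord_mem hx)] using h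
  obtain ⟨g', hg', hw'⟩ : ∃ g' ∈ inside F V, bd z₁ = a • b + bd g' := by
    refine ⟨g + prism (killCoord j) id (bd z₁), Submodule.add_mem _ (hbV hg) hprism, ?_⟩
    rw [map_add, bd_prism, bd_bd, map_zero, push_id, hag]
    abel
  have hbs : ∀ ε, b ∈ inside F (slit s j ε) := fun ε => inside_mono (hVslit ε) (hbV hb)
  have hcone : ∀ ε : ℝ, ε ≠ 0 → cone (Pi.single j ε) b ∈ inside F (slit s j ε) := fun ε hε =>
    cone_mem_inside (single_mem_slit s j hε) (starConvex_slit s j hε) (hbs ε)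
  obtain ⟨h₁, hh₁, e₁⟩ := exists_bd_of_starConvex (c := z₁ - a • cone (Pi.single j 1) b - g')
    (single_mem_slit s j one_ne_zero) (starConvex_slit s j one_ne_zero)
    (Submodule.sub_mem _ (Submodule.sub_mem _ hz₁ (Submodule.smul_mem _ _
      (hcone 1 one_ne_zero))) (inside_mono (hVslit 1) hg'))
    (by rw [map_sub, map_sub, map_smul, bd_cone, hb0, hw']; simp)
  obtain ⟨h₂, hh₂, e₂⟩ := exists_bd_of_starConvex (c := z₂ + a • cone (Pi.single j (-1)) b + g')
    (single_mem_slit s j (neg_ne_zero.2 one_ne_zero))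
    (starConvex_slit s j (neg_ne_zero.2 one_ne_zero))
    (Submodule.add_mem _ (Submodule.add_mem _ hz₂ (Submodule.smul_mem _ _
      (hcone (-1) (neg_ne_zero.2 one_ne_zero)))) (inside_mono (hVslit (-1)) hg'))
    (by
      rw [map_add, map_add, map_smul, bd_cone, hb0, eq_neg_of_add_eq_zero_right hsum, hw']
      simp)
  refine ⟨a, g₀ + h₁ + h₂, Submodule.add_mem _ (Submodule.add_mem _ hg₀
    (inside_mono (slit_subset s j 1) hh₁)) (inside_mono (slit_subset s j (-1)) hh₂), ?_⟩
  rw [map_add, map_add, ← e₀, e₁, e₂, e, smul_sub]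
  abel

/-- The boundary of a cube generates the homology of a punctured coordinate space. -/
theorem exists_cube (F : Type*) [CommRing F] (s : Finset ι) :
    ∃ C ∈ inside F (coordSpace s : Set (ι → ℝ)),
      bd C ∈ inside F ((coordSpace s : Set (ι → ℝ)) \ {0}) ∧
      (s = ∅ → bd C = Finsupp.single [] 1) ∧
      (s.Nonempty → bd C ∈ oppositeFaces F s) ∧
      ∀ z ∈ inside F ((coordSpace s : Set (ι → ℝ)) \ {0}), bd z = 0 →
        ∃ a : F, ∃ g ∈ inside F ((coordSpace s : Set (ι → ℝ)) \ {0}), z = a • bd C + bd g := by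
  induction s using Finset.induction_on with
  | empty =>
    have h0 : bd (Finsupp.single [0] 1 : ListChain F (ι → ℝ)) = Finsupp.single [] 1 := by
      simp [bdList]
    refine ⟨Finsupp.single [0] 1, single_mem_inside ?_ 1, ?_, fun _ => h0, by simp, ?_⟩
    · simp
    · rw [h0]
      exact single_mem_inside (by simp) 1
    · intro z hz _
      have hsub : inside F ((coordSpace (∅ : Finset ι) : Set (ι → ℝ)) \ {0}) ≤
          Finsupp.supported F F {[]} := by
        refine Finsupp.supported_mono ?_
        intro l hl
        rw [Set.mem_singleton_iff, List.eq_nil_iff_forall_not_mem]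
        intro x hx
        obtain ⟨h1, h2⟩ := hl (subset_convexHull _ _ hx)
        exact h2 (funext fun i => h1 i (by simp))
      refine ⟨z [], 0, Submodule.zero_mem _, ?_⟩
      have := Finsupp.support_subset_singleton.1 (show z.support ⊆ {[]} by
        exact_mod_cast (Finsupp.mem_supported _ _).1 (hsub hz))
      rw [h0]
      conv_lhs => rw [this]
      simp
  | insert j s hj ih =>
    obtain ⟨C, hC, hbC, hC0, hK, hgen⟩ := ih
    set b := bd C with hb
    have hbb : bd b = 0 := bd_bd C
    have hbij : ∀ x ∈ coordSpace s, ∀ t : ℝ, x + Pi.single j t ∈ coordSpace (insert j s) :=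
      fun x hx t => add_mem (coordSpace_le_insert s j hx) (single_mem_coordSpace s j t)
    have hseg : ∀ t u : ℝ, ∀ x y, segment ℝ x y ⊆ (coordSpace s : Set (ι → ℝ)) →
        ∀ z ∈ segment ℝ (trans (Pi.single j t) x) (trans (Pi.single j u) y),
          z ∈ coordSpace (insert j s) := by
      rintro t u x y h _ ⟨α, β, -, -, -, rfl⟩
      simp only [trans_apply]
      exact add_mem (Submodule.smul_mem _ _ (hbij x (h (left_mem_segment ℝ x y)) t))
        (Submodule.smul_mem _ _ (hbij y (h (right_mem_segment ℝ x y)) u))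
    have hprism : ∀ t u ε : ℝ, prism (trans (Pi.single j t)) (trans (Pi.single j u)) b ∈
        inside F (slit s j ε) := by
      intro t u ε
      refine prism_mem_inside _ _ ?_ hbC
      intro x y h z hz
      refine ⟨hseg t u x y (h.trans Set.sdiff_subset) z hz, Or.inl ?_⟩
      obtain ⟨α, β, hα, hβ, hαβ, rfl⟩ := hz
      have h1 := h ⟨α, β, hα, hβ, hαβ, rfl⟩
      have h2 : killCoord j (α • trans (Pi.single j t) x + β • trans (Pi.single j u) y) =
          killCoord j (α • x + β • y) := by simp
      rw [h2, killCoord_eq_self hj h1.1]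
      exact h1.2
    have hpush : ∀ ε : ℝ, ε ≠ 0 → push (trans (Pi.single j ε)) C ∈ inside F (slit s j ε) := by
      intro ε hε
      refine push_mem_inside _ (fun x hx => ?_) hC
      rw [trans_apply]
      refine ⟨hbij x hx ε, Or.inr ?_⟩
      simpa [hx j hj] using mul_self_pos.2 hε
    have hid : ∀ c : ListChain F (ι → ℝ), push (trans (Pi.single j (0 : ℝ))) c = c := by
      intro c
      have : (trans (Pi.single j (0 : ℝ)) : (ι → ℝ) → ι → ℝ) = id := by ext; simp
      rw [this, push_id]
    set C' := prism (trans (Pi.single j (-1))) (trans (Pi.single j 0)) C +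
      prism (trans (Pi.single j 0)) (trans (Pi.single j 1)) C with hC'
    set y₁ := push (trans (Pi.single j 1)) C -
      prism (trans (Pi.single j 0)) (trans (Pi.single j 1)) b with hy₁
    set y₂ := -push (trans (Pi.single j (-1))) C -
      prism (trans (Pi.single j (-1))) (trans (Pi.single j 0)) b with hy₂
    have hbC' : bd C' = y₁ + y₂ := by
      rw [hC', map_add, bd_prism, bd_prism, hid, ← hb, hy₁, hy₂]
      abel
    have hy₁m : y₁ ∈ inside F (slit s j 1) :=
      Submodule.sub_mem _ (hpush 1 one_ne_zero) (hprism _ _ _)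
    have hy₂m : y₂ ∈ inside F (slit s j (-1)) :=
      Submodule.sub_mem _ (Submodule.neg_mem _ (hpush (-1) (by norm_num))) (hprism _ _ _)
    have hby₁ : bd y₁ = b := by
      rw [hy₁, map_sub, bd_prism, bd_push, hbb, hid, ← hb, map_zero]
      abel
    have hby₂ : bd y₂ = -b := by
      rw [hy₂, map_sub, bd_prism, map_neg, bd_push, hbb, hid, ← hb, map_zero]
      abel
    have hcone : ∀ ε : ℝ, ε ≠ 0 → cone (Pi.single j ε) b ∈ inside F (slit s j ε) := fun ε hε =>
      cone_mem_inside (single_mem_slit s j hε) (starConvex_slit s j hε)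
        (inside_mono (by
          rintro x ⟨hx, hx'⟩
          exact ⟨coordSpace_le_insert s j hx, Or.inl (by rwa [killCoord_eq_self hj hx])⟩) hbC)
    refine ⟨C', ?_, ?_, fun h => absurd h (Finset.insert_ne_empty _ _), fun _ => ?_, ?_⟩
    · exact Submodule.add_mem _ (prism_mem_inside _ _ (hseg _ _) hC)
        (prism_mem_inside _ _ (hseg _ _) hC)
    · rw [hbC']
      exact Submodule.add_mem _ (inside_mono (slit_subset s j 1) hy₁m)
        (inside_mono (slit_subset s j (-1)) hy₂m)
    · have h1 : ∀ t u : ℝ, prism (trans (Pi.single j t)) (trans (Pi.single j u)) b ∈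
          oppositeFaces F (insert j s) := by
        intro t u
        rcases s.eq_empty_or_nonempty with h | h
        · rw [hC0 h, prism_single]
          exact Submodule.zero_mem _
        · exact prism_mem_oppositeFaces hj t u (hK h)
      have h2 : push (trans (Pi.single j 1)) C - push (trans (Pi.single j (-1))) C ∈
          oppositeFaces F (insert j s) := by
        refine sub_mem_oppositeFaces (Finset.mem_insert_self j s) ?_
        refine Finsupp.supported_mono ?_ hC
        exact fun l hl v hv => hl (subset_convexHull _ _ hv) j hj
      have : y₁ + y₂ = (push (trans (Pi.single j 1)) C - push (trans (Pi.single j (-1))) C) -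
          prism (trans (Pi.single j 0)) (trans (Pi.single j 1)) b -
          prism (trans (Pi.single j (-1))) (trans (Pi.single j 0)) b := by
        rw [hy₁, hy₂]; abel
      rw [hbC', this]
      exact Submodule.sub_mem _ (Submodule.sub_mem _ h2 (h1 _ _)) (h1 _ _)
    · intro z hz hz0
      obtain ⟨a, g, hg, e⟩ := exists_eq_cone_sub_cone hj hbC hbb hgen hz hz0
      obtain ⟨h₁, hh₁, e₁⟩ := exists_bd_of_starConvex (c := y₁ - cone (Pi.single j 1) b)
        (single_mem_slit s j one_ne_zero) (starConvex_slit s j one_ne_zero)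
        (Submodule.sub_mem _ hy₁m (hcone 1 one_ne_zero))
        (by rw [map_sub, bd_cone, hbb, hby₁]; simp)
      obtain ⟨h₂, hh₂, e₂⟩ := exists_bd_of_starConvex (c := y₂ + cone (Pi.single j (-1)) b)
        (single_mem_slit s j (neg_ne_zero.2 one_ne_zero))
        (starConvex_slit s j (neg_ne_zero.2 one_ne_zero))
        (Submodule.add_mem _ hy₂m (hcone (-1) (neg_ne_zero.2 one_ne_zero)))
        (by rw [map_add, bd_cone, hbb, hby₂]; simp)
      refine ⟨a, g - a • (h₁ + h₂), Submodule.sub_mem _ hg (Submodule.smul_mem _ _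
        (Submodule.add_mem _ (inside_mono (slit_subset s j 1) hh₁)
          (inside_mono (slit_subset s j (-1)) hh₂))), ?_⟩
      rw [e, hbC', map_sub, map_smul, map_add, e₁, e₂]
      module

end Local

section Cochain

variable {F : Type*} [CommRing F] {V W : Type*}

/-- The linear functional on chains extending a function on lists. -/
noncomputable def ev (f : List V → F) : ListChain F V →ₗ[F] F :=
  Finsupp.linearCombination F f

@[simp] theorem ev_single (f : List V → F) (l : List V) : ev f (Finsupp.single l (1 : F)) = f l := by
  simp [ev]

theorem ev_cone (f : List V → F) (v : V) (c : ListChain F V) :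
    ev f (cone v c) = ev (fun l => f (v :: l)) c := by
  have : ev f ∘ₗ cone v = ev (fun l => f (v :: l)) := hom_ext fun l => by simp
  exact LinearMap.congr_fun this c

theorem ev_push (f : List W → F) (φ : V → W) (c : ListChain F V) :
    ev f (push φ c) = ev (fun l => f (l.map φ)) c := by
  have : ev f ∘ₗ push φ = ev (fun l => f (l.map φ)) := hom_ext fun l => by simp
  exact LinearMap.congr_fun this c

theorem ev_mul_left (a : F) (f : List V → F) (c : ListChain F V) :
    ev (fun l => a * f l) c = a * ev f c := by
  have : ev (fun l => a * f l) = a • ev f := hom_ext fun l => by simp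
  simp [this]

theorem ev_eq_zero {f : List V → F} {S : Set (List V)} (h : ∀ l ∈ S, f l = 0)
    {c : ListChain F V} (hc : c ∈ Finsupp.supported F F S) : ev f c = 0 :=
  map_eq_of_supported (ev f) 0 (fun l hl => by simp [h l hl]) hc

theorem ev_bd_eq_zero {f : List V → F} (h : ∀ l, ev f (bdList F l) = 0) (c : ListChain F V) :
    ev f (bd c) = 0 := by
  have : ev f ∘ₗ bd = 0 := hom_ext fun l => by simp [h]
  exact LinearMap.congr_fun this c

/-- The Vandermonde product of a list. -/
def vandermonde : List F → F
  | [] => 1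
  | v :: l => (l.map (· - v)).prod * vandermonde l

theorem vandermonde_exchange (a b : F) (g : List F → F) (l : List F) :
    (b - a) * ev (fun m => (m.map (· - a)).prod * (m.map (· - b)).prod * g m) (bdList F l) =
      (l.map (· - a)).prod * ev (fun m => (m.map (· - b)).prod * g m) (bdList F l) -
      (l.map (· - b)).prod * ev (fun m => (m.map (· - a)).prod * g m) (bdList F l) := by
  induction l generalizing g with
  | nil => simp [bdList]
  | cons c l ih =>
    have h1 : ev (fun m => ((c :: m).map (· - a)).prod * ((c :: m).map (· - b)).prod *
        g (c :: m)) (bdList F l) = (c - a) * (c - b) * ev (fun m => (m.map (· - a)).prod *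
          (m.map (· - b)).prod * g (c :: m)) (bdList F l) := by
      rw [← ev_mul_left]
      congr 2
      ext m
      simp only [List.map_cons, List.prod_cons]
      ring
    have h2 : ∀ a, ev (fun m => ((c :: m).map (· - a)).prod * g (c :: m)) (bdList F l) =
        (c - a) * ev (fun m => (m.map (· - a)).prod * g (c :: m)) (bdList F l) := by
      intro a
      rw [← ev_mul_left]
      congr 2
      ext m
      simp only [List.map_cons, List.prod_cons]
      ring
    simp only [bdList, map_sub, ev_cone, h1, h2, ev_single]
    have := ih fun m => g (c :: m)
    simp only [List.map_cons, List.prod_cons]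
    linear_combination -(c - a) * (c - b) * this

theorem ev_mul_vandermonde (a : F) {l : List F} (hl : l ≠ []) :
    ev (fun m => (m.map (· - a)).prod * vandermonde m) (bdList F l) = vandermonde l := by
  induction l generalizing a with
  | nil => exact absurd rfl hl
  | cons b l ih =>
    rcases eq_or_ne l [] with rfl | hl
    · simp [bdList, vandermonde]
    have h1 : ev (fun m => ((b :: m).map (· - a)).prod * vandermonde (b :: m)) (bdList F l) =
        (b - a) * ev (fun m => (m.map (· - a)).prod * (m.map (· - b)).prod * vandermonde m)
          (bdList F l) := by
      rw [← ev_mul_left]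
      congr 2
      ext m
      simp only [List.map_cons, List.prod_cons, vandermonde]
      ring
    rw [bdList, map_sub, ev_cone, h1, ev_single, vandermonde_exchange, ih _ hl, ih _ hl, vandermonde]
    ring

theorem ev_vandermonde_bdList {l : List F} (hl : 2 ≤ l.length) :
    ev vandermonde (bdList F l) = 0 := by
  match l, hl with
  | a :: b :: l, _ =>
    rw [bdList, map_sub, ev_cone, ev_single, sub_eq_zero]
    exact (ev_mul_vandermonde a (List.cons_ne_nil b l)).symm

theorem vandermonde_map_add (l : List F) (a : F) :
    vandermonde (l.map (· + a)) = vandermonde l := by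
  induction l with
  | nil => rfl
  | cons v l ih =>
    simp only [List.map_cons, vandermonde, ih, List.map_map]
    congr 3
    ext x
    simp

theorem vandermonde_eq_zero {l : List F} (hl : ¬ l.Nodup) : vandermonde l = 0 := by
  induction l with
  | nil => simp at hl
  | cons v l ih =>
    rw [List.nodup_cons, not_and_or, not_not] at hl
    rw [vandermonde]
    rcases hl with h | h
    · rw [List.prod_eq_zero, zero_mul]
      exact List.mem_map.2 ⟨v, h, sub_self v⟩
    · rw [ih h, mul_zero]

theorem vandermonde_ne_zero [IsDomain F] {l : List F} (hl : l.Nodup) : vandermonde l ≠ 0 := by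
  induction l with
  | nil => simp [vandermonde]
  | cons v l ih =>
    rw [List.nodup_cons] at hl
    refine mul_ne_zero ?_ (ih hl.2)
    refine List.prod_ne_zero fun h => ?_
    obtain ⟨x, hx, e⟩ := List.mem_map.1 h
    exact hl.1 (sub_eq_zero.1 e ▸ hx)

/-- The Vandermonde product on lists of length `n`, and zero on other lists. -/
def vandermondeCochain (n : ℕ) (l : List F) : F :=
  if l.length = n then vandermonde l else 0

theorem ev_vandermondeCochain_bdList {n : ℕ} (hn : 1 ≤ n) (l : List F) :
    ev (vandermondeCochain n) (bdList F l) = 0 := by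
  by_cases h : l.length = n + 1
  · rw [← ev_vandermonde_bdList (show 2 ≤ l.length by omega)]
    refine map_eq_of_supported _ _ ?_ (bdList_mem_supported l)
    rintro m ⟨hm, -⟩
    simp [vandermondeCochain, show m.length = n by omega]
  · refine ev_eq_zero ?_ (bdList_mem_supported l)
    rintro m ⟨hm, -⟩
    simp [vandermondeCochain, show m.length ≠ n by omega]

/-- The product of a cochain of degree `a` with another cochain. -/
def cup : ℕ → (List V → F) → (List V → F) → List V → F
  | _, _, _, [] => 0
  | 0, f, g, x :: l => f [x] * g (x :: l)
  | a + 1, f, g, x :: l => cup a (fun m => f (x :: m)) g l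

theorem cup_nil (a : ℕ) (f g : List V → F) : cup a f g [] = 0 := by
  cases a <;> rfl

theorem cup_zero_cons (f g : List V → F) (x : V) (l : List V) :
    cup 0 f g (x :: l) = f [x] * g (x :: l) := rfl

theorem cup_succ_cons (a : ℕ) (f g : List V → F) (x : V) (l : List V) :
    cup (a + 1) f g (x :: l) = cup a (fun m => f (x :: m)) g l := rfl

theorem cup_sub (a : ℕ) (f f' g : List V → F) (l : List V) :
    cup a (fun m => f m - f' m) g l = cup a f g l - cup a f' g l := by
  induction l generalizing a f f' with
  | nil => simp [cup_nil]
  | cons x l ih =>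
    cases a with
    | zero => simp only [cup_zero_cons]; ring
    | succ a => simp only [cup_succ_cons]; exact ih _ _ _

theorem cup_map (φ : V → W) (a : ℕ) (f g : List W → F) (l : List V) :
    cup a f g (l.map φ) = cup a (fun m => f (m.map φ)) (fun m => g (m.map φ)) l := by
  induction l generalizing a f with
  | nil => simp [cup_nil]
  | cons x l ih =>
    cases a with
    | zero => simp [cup_zero_cons]
    | succ a => simpa only [List.map_cons, cup_succ_cons] using ih _ _

theorem cup_eq_zero_left {Q : V → Prop} {f : List V → F}
    (hf : ∀ l : List V, (∀ x ∈ l, Q x) → f l = 0) (a : ℕ) (g : List V → F) {l : List V}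
    (hl : ∀ x ∈ l, Q x) : cup a f g l = 0 := by
  induction l generalizing a f with
  | nil => simp [cup_nil]
  | cons x l ih =>
    have hx := hl x (by simp)
    cases a with
    | zero => rw [cup_zero_cons, hf [x] (by simpa using hx), zero_mul]
    | succ a =>
      refine ih (fun m hm => hf _ ?_) _ fun y hy => hl y (by simp [hy])
      simpa using ⟨hx, hm⟩

theorem cup_eq_zero_right {Q : V → Prop} {g : List V → F}
    (hg : ∀ l : List V, (∀ x ∈ l, Q x) → g l = 0) (a : ℕ) (f : List V → F) {l : List V}
    (hl : ∀ x ∈ l, Q x) : cup a f g l = 0 := by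
  induction l generalizing a f with
  | nil => simp [cup_nil]
  | cons x l ih =>
    cases a with
    | zero => rw [cup_zero_cons, hg _ hl, mul_zero]
    | succ a => exact ih _ _ fun y hy => hl y (by simp [hy])

theorem ev_cup_bdList (a : ℕ) (f : List V → F) {g : List V → F} (hg : g [] = 0) (l : List V) :
    ev (cup a f g) (bdList F l) = cup (a + 1) (fun m => ev f (bdList F m)) g l +
      (-1) ^ a * cup a f (fun m => ev g (bdList F m)) l := by
  induction l generalizing a f with
  | nil => simp [bdList, cup_nil]
  | cons x l ih =>
    cases a with
    | zero =>
      simp only [bdList, map_sub, ev_single, ev_cone, cup_zero_cons, ev_mul_left, cup_succ_cons,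
        pow_zero, one_mul]
      cases l with
      | nil => simp [cup_nil, bdList, hg]
      | cons y l =>
        simp only [cup_zero_cons, bdList, map_sub, ev_single, map_zero]
        ring
    | succ a =>
      simp only [bdList, map_sub, ev_single, ev_cone, cup_succ_cons, ih, cup_sub]
      ring

theorem ev_cup_bdList_eq_zero (a : ℕ) {f g : List V → F} (hg0 : g [] = 0)
    (hf : ∀ l, ev f (bdList F l) = 0) (hg : ∀ l, ev g (bdList F l) = 0) (l : List V) :
    ev (cup a f g) (bdList F l) = 0 := by
  rw [ev_cup_bdList a f hg0, cup_eq_zero_left (Q := fun _ => True) (fun l _ => hf l) _ _ (by simp),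
    cup_eq_zero_right (Q := fun _ => True) (fun l _ => hg l) _ _ (by simp)]
  simp

/-- The product over the first `d` rows of the Vandermonde cochains of length `n + 1`. -/
def rowCochain (F : Type*) [CommRing F] (n : ℕ) : ℕ → List (ℕ → F) → F
  | 0, l => if l.length = 1 then 1 else 0
  | d + 1, l => cup n (fun m => vandermondeCochain (n + 1) (m.map fun v => v d)) (rowCochain F n d) l

theorem rowCochain_nil (n d : ℕ) : rowCochain F n d [] = 0 := by
  cases d with
  | zero => simp [rowCochain]
  | succ d => exact cup_nil _ _ _

theorem ev_rowCochain_bdList (n d : ℕ) (l : List (ℕ → F)) :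
    ev (rowCochain F n d) (bdList F l) = 0 := by
  induction d generalizing l with
  | zero =>
    match l with
    | [] => simp [bdList]
    | [x] => simp [bdList, rowCochain]
    | [x, y] => simp [bdList, rowCochain]
    | x :: y :: z :: l =>
      refine ev_eq_zero ?_ (bdList_mem_supported _)
      rintro m ⟨hm, -⟩
      have : m.length ≠ 1 := by simp at hm; omega
      simp [rowCochain, this]
  | succ d ih =>
    refine ev_cup_bdList_eq_zero _ (rowCochain_nil n d) (fun m => ?_) ih l
    rw [← ev_push, ← bdList_map, ev_vandermondeCochain_bdList (by omega)]

theorem rowCochain_map (n d : ℕ) (a : F) (l : List (ℕ → F)) :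
    rowCochain F n d (l.map fun v k => v k + a) = rowCochain F n d l := by
  induction d generalizing l with
  | zero => simp [rowCochain]
  | succ d ih =>
    simp only [rowCochain, cup_map, ih]
    congr 1
    ext m
    have : (m.map fun v => v d + a) = (m.map fun v => v d).map (· + a) := by
      simp [Function.comp_def]
    simp only [vandermondeCochain, List.map_map, Function.comp_def, List.length_map]
    rw [this, vandermonde_map_add]

theorem vandermondeCochain_eq_zero [Fintype F] [DecidableEq F] {i : F} {l : List F} (hl : i ∉ l) :
    vandermondeCochain (Fintype.card F) l = 0 := by
  rw [vandermondeCochain]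
  split_ifs with h
  · refine vandermonde_eq_zero fun hnd => hl ?_
    have : l.toFinset = Finset.univ :=
      Finset.eq_univ_of_card _ (by rw [List.toFinset_card_of_nodup hnd, h])
    rw [← List.mem_toFinset, this]
    exact Finset.mem_univ i
  · rfl

theorem rowCochain_eq_zero [Fintype F] [DecidableEq F] {n : ℕ} (hn : n + 1 = Fintype.card F)
    {d k : ℕ} (hk : k < d) {i : F} {l : List (ℕ → F)} (hl : ∀ v ∈ l, v k ≠ i) :
    rowCochain F n d l = 0 := by
  induction d generalizing l with
  | zero => omega
  | succ d ih =>
    rcases Nat.lt_succ_iff_lt_or_eq.1 hk with h | rfl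
    · exact cup_eq_zero_right (Q := fun v => v k ≠ i) (fun m hm => ih h hm) _ _ hl
    · refine cup_eq_zero_left (Q := fun v => v k ≠ i) (fun m hm => ?_) _ _ hl
      rw [hn]
      refine vandermondeCochain_eq_zero (i := i) fun h => ?_
      obtain ⟨v, hv, e⟩ := List.mem_map.1 h
      exact hm v hv e

end Cochain

section Tower

variable {F : Type*} [CommRing F] {V W : Type*}

/-- The sum of the first `p` iterates of the shift `T`. -/
noncomputable def orbitSum (T : V → V) (p : ℕ) : ListChain F V →ₗ[F] ListChain F V :=
  ∑ i ∈ Finset.range p, (push T : Module.End F (ListChain F V)) ^ i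

theorem map_orbitSum_of_mem {T : V → V} {T' : W → W} (p : ℕ)
    (φ : ListChain F V →ₗ[F] ListChain F W) {N : Submodule F (ListChain F V)}
    (hN : ∀ x ∈ N, push T x ∈ N) (h : ∀ x ∈ N, φ (push T x) = push T' (φ x))
    {x : ListChain F V} (hx : x ∈ N) : φ (orbitSum T p x) = orbitSum T' p (φ x) := by
  have key : ∀ i, ((push T : Module.End F (ListChain F V)) ^ i) x ∈ N ∧
      φ (((push T : Module.End F (ListChain F V)) ^ i) x) =
        ((push T' : Module.End F (ListChain F W)) ^ i) (φ x) := by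
    intro i
    induction i with
    | zero => exact ⟨hx, rfl⟩
    | succ i ih =>
      rw [pow_succ', pow_succ', Module.End.mul_apply, Module.End.mul_apply, h _ ih.1, ih.2]
      exact ⟨hN _ ih.1, rfl⟩
  simp only [orbitSum, LinearMap.sum_apply, map_sum, (key _).2]

theorem map_orbitSum {T : V → V} {T' : W → W} (p : ℕ) (φ : ListChain F V →ₗ[F] ListChain F W)
    (h : ∀ x, φ (push T x) = push T' (φ x)) (x : ListChain F V) :
    φ (orbitSum T p x) = orbitSum T' p (φ x) :=
  map_orbitSum_of_mem p φ (N := ⊤) (fun _ _ => trivial) (fun x _ => h x) trivial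

theorem push_pow {T : V → V} {p : ℕ} (hT : T^[p] = id) :
    (push T : Module.End F (ListChain F V)) ^ p = 1 := by
  have : ∀ n (x : ListChain F V), (push T)^[n] x = push T^[n] x := by
    intro n x
    induction n with
    | zero => exact (push_id x).symm
    | succ n ih => rw [Function.iterate_succ_apply', ih, push_push, Function.iterate_succ']
  refine LinearMap.ext fun x => ?_
  rw [Module.End.pow_apply, this, hT, push_id]
  rfl

theorem orbitSum_push_sub {T : V → V} {p : ℕ} (hT : T^[p] = id) (x : ListChain F V) :
    orbitSum T p (push T x - x) = 0 := by
  have := geom_sum_mul (push T : Module.End F (ListChain F V)) p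
  rw [push_pow hT, sub_self] at this
  exact LinearMap.congr_fun this x

theorem push_orbitSum_sub {T : V → V} {p : ℕ} (hT : T^[p] = id) (x : ListChain F V) :
    push T (orbitSum T p x) - orbitSum T p x = 0 := by
  rw [map_orbitSum p (push T) (fun _ => rfl), ← map_sub, orbitSum_push_sub hT]

/-- A sequence of chains built like the standard resolution of the cyclic group. -/
structure IsTower (T : V → V) (p n : ℕ) (z c a : ℕ → ListChain F V) : Prop where
  bd_c : ∀ j < n, bd (c j) = z j
  bd_a : ∀ j < n, bd (a j) = push T (c j) - c j
  succ : ∀ j < n, z (j + 1) = orbitSum T p (a j)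

theorem IsTower.map_of_mem {T : V → V} {T' : W → W} {p n : ℕ} {z c a : ℕ → ListChain F V}
    (h : IsTower T p n z c a) (φ : ListChain F V →ₗ[F] ListChain F W)
    (hbd : ∀ x, φ (bd x) = bd (φ x)) {N : Submodule F (ListChain F V)}
    (hN : ∀ x ∈ N, push T x ∈ N) (hφ : ∀ x ∈ N, φ (push T x) = push T' (φ x))
    (hc : ∀ j < n, c j ∈ N) (ha : ∀ j < n, a j ∈ N) :
    IsTower T' p n (fun j => φ (z j)) (fun j => φ (c j)) (fun j => φ (a j)) where
  bd_c j hj := by rw [← hbd, h.bd_c j hj]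
  bd_a j hj := by rw [← hbd, h.bd_a j hj, map_sub, hφ _ (hc j hj)]
  succ j hj := by rw [h.succ j hj, map_orbitSum_of_mem p φ hN hφ (ha j hj)]

theorem IsTower.map {T : V → V} {T' : W → W} {p n : ℕ} {z c a : ℕ → ListChain F V}
    (h : IsTower T p n z c a) (φ : ListChain F V →ₗ[F] ListChain F W)
    (hbd : ∀ x, φ (bd x) = bd (φ x)) (hφ : ∀ x, φ (push T x) = push T' (φ x)) :
    IsTower T' p n (fun j => φ (z j)) (fun j => φ (c j)) (fun j => φ (a j)) :=
  h.map_of_mem φ hbd (N := ⊤) (fun _ _ => trivial) (fun x _ => hφ x) (fun _ _ => trivial)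
    (fun _ _ => trivial)

theorem IsTower.sub {T : V → V} {p n : ℕ} {z c a z' c' a' : ℕ → ListChain F V}
    (h : IsTower T p n z c a) (h' : IsTower T p n z' c' a') :
    IsTower T p n (fun j => z j - z' j) (fun j => c j - c' j) (fun j => a j - a' j) where
  bd_c j hj := by rw [map_sub, h.bd_c j hj, h'.bd_c j hj]
  bd_a j hj := by rw [map_sub, h.bd_a j hj, h'.bd_a j hj, map_sub]; abel
  succ j hj := by rw [map_sub, h.succ j hj, h'.succ j hj]

theorem apply_eq_apply_cone_bd {E : ListChain F V →ₗ[F] F} (hE : ∀ x, E (bd x) = 0) (b : V)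
    (x : ListChain F V) : E x = E (cone b (bd x)) := by
  have := hE (cone b x)
  rwa [bd_cone, map_sub, sub_eq_zero] at this

theorem IsTower.apply_cone_eq_zero {T : V → V} {p : ℕ} (hT : T^[p] = id) (b : V) {n : ℕ}
    {z c a : ℕ → ListChain F V} (h : IsTower T p n z c a) (h0 : z 0 = 0)
    {E : ListChain F V →ₗ[F] F} (hE : ∀ x, E (bd x) = 0) (hE' : ∀ x, E (orbitSum T p x) = 0) :
    E (cone b (z n)) = 0 := by
  induction n generalizing E with
  | zero => simp [h0]
  | succ n ih =>
    have hbdT : ∀ x : ListChain F V, bd (push T x) = push T (bd x) := bd_push T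
    have hbdN : ∀ x : ListChain F V, bd (orbitSum T p x) = orbitSum T p (bd x) :=
      map_orbitSum p bd hbdT
    let Ψ : ListChain F V →ₗ[F] F := E ∘ₗ cone b ∘ₗ orbitSum T p
    have hΨ : ∀ x, Ψ (bd x) = 0 := fun x => by
      change E (cone b (orbitSum T p (bd x))) = 0
      rw [← hbdN, ← apply_eq_apply_cone_bd hE, hE']
    let Θ : ListChain F V →ₗ[F] F := Ψ ∘ₗ cone b ∘ₗ (push T - LinearMap.id)
    have hΘ : ∀ x, Θ (bd x) = 0 := fun x => by
      change Ψ (cone b (push T (bd x) - bd x)) = 0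
      rw [← hbdT, ← map_sub, ← apply_eq_apply_cone_bd hΨ]
      change E (cone b (orbitSum T p (push T x - x))) = 0
      rw [orbitSum_push_sub hT, map_zero, map_zero]
    have hΘ' : ∀ x, Θ (orbitSum T p x) = 0 := fun x => by
      change Ψ (cone b (push T (orbitSum T p x) - orbitSum T p x)) = 0
      rw [push_orbitSum_sub hT, map_zero, map_zero]
    have h' : IsTower T p n z c a := ⟨fun j hj => h.bd_c j (by omega),
      fun j hj => h.bd_a j (by omega), fun j hj => h.succ j (by omega)⟩
    have key := ih h' hΘ hΘ'
    rw [← h.bd_c n (by omega), ← apply_eq_apply_cone_bd hΘ] at key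
    change Ψ (cone b (push T (c n) - c n)) = 0 at key
    rw [← h.bd_a n (by omega), ← apply_eq_apply_cone_bd hΨ] at key
    rw [h.succ n (by omega)]
    exact key

theorem IsTower.apply_cone_eq {T : V → V} {p : ℕ} (hT : T^[p] = id) (hp : (p : F) = 0) (b : V)
    {n : ℕ} {z c a z' c' a' : ℕ → ListChain F V} (h : IsTower T p n z c a)
    (h' : IsTower T p n z' c' a') (h0 : z 0 = z' 0)
    {E : ListChain F V →ₗ[F] F} (hE : ∀ x, E (bd x) = 0) (hE' : ∀ x, E (push T x) = E x) :
    E (cone b (z n)) = E (cone b (z' n)) := by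
  have hsum : ∀ x, E (orbitSum T p x) = 0 := by
    intro x
    have : ∀ i, E (((push T : Module.End F (ListChain F V)) ^ i) x) = E x := by
      intro i
      induction i with
      | zero => rfl
      | succ i ih => rw [pow_succ', Module.End.mul_apply, hE', ih]
    simp [orbitSum, this, hp]
  have := (h.sub h').apply_cone_eq_zero hT b (by simp [h0]) hE hsum
  rwa [map_sub, map_sub, sub_eq_zero] at this

end Tower

section Pairs

variable {F : Type*} [CommRing F] {p : ℕ} [NeZero p] {K : Type*}

/-- Sum over all `i` of prepending the consecutive labels `i`, `i + 1` in row `k`. -/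
noncomputable def pairSum (p : ℕ) [NeZero p] (k : K) :
    ListChain F (ZMod p × K) →ₗ[F] ListChain F (ZMod p × K) :=
  ∑ i : ZMod p, cone (i, k) ∘ₗ cone (i + 1, k)

/-- The iterated pair sums, in the rows prescribed by `κ`. -/
noncomputable def pairCycle (F : Type*) [CommRing F] (p : ℕ) [NeZero p] (κ : ℕ → K) :
    ℕ → ListChain F (ZMod p × K)
  | 0 => Finsupp.single [] 1
  | j + 1 => pairSum p (κ j) (pairCycle F p κ j)

/-- The cyclic shift of labels. -/
def shiftLabel (x : ZMod p × K) : ZMod p × K := (x.1 + 1, x.2)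

theorem pairSum_apply (k : K) (x : ListChain F (ZMod p × K)) :
    pairSum p k x = ∑ i : ZMod p, cone (i, k) (cone (i + 1, k) x) := by
  simp [pairSum]

theorem push_shiftLabel_pairCycle (κ : ℕ → K) (j : ℕ) :
    push shiftLabel (pairCycle F p κ j) = pairCycle F p κ j := by
  induction j with
  | zero => simp [pairCycle]
  | succ j ih =>
    rw [pairCycle, pairSum_apply, map_sum]
    simp only [push_cone, ih, shiftLabel]
    exact Equiv.sum_comp (Equiv.addRight (1 : ZMod p))
      (fun i => cone (i, κ j) (cone (i + 1, κ j) (pairCycle F p κ j)))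

theorem bd_pairCycle (κ : ℕ → K) (j : ℕ) : bd (pairCycle F p κ j) = 0 := by
  induction j with
  | zero => simp [pairCycle, bdList]
  | succ j ih =>
    rw [pairCycle, pairSum_apply, map_sum]
    simp only [bd_cone, ih, map_zero, sub_zero, Finset.sum_sub_distrib]
    rw [sub_eq_zero]
    exact Equiv.sum_comp (Equiv.addRight (1 : ZMod p))
      (fun i => cone (i, κ j) (pairCycle F p κ j))

theorem isTower_pairCycle (κ : ℕ → K) (n : ℕ) :
    IsTower shiftLabel p n (pairCycle F p κ) (fun j => cone (0, κ j) (pairCycle F p κ j))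
      (fun j => cone (0, κ j) (cone (1, κ j) (pairCycle F p κ j))) where
  bd_c j _ := by rw [bd_cone, bd_pairCycle, map_zero, sub_zero]
  bd_a j _ := by
    rw [bd_cone, bd_cone, bd_pairCycle, map_zero, sub_zero, push_cone,
      push_shiftLabel_pairCycle, shiftLabel]
    simp
  succ j _ := by
    have : ∀ i : ℕ, ((push shiftLabel : Module.End F (ListChain F (ZMod p × K))) ^ i)
        (cone (0, κ j) (cone (1, κ j) (pairCycle F p κ j))) =
        cone ((i : ZMod p), κ j) (cone ((i : ZMod p) + 1, κ j) (pairCycle F p κ j)) := by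
      intro i
      induction i with
      | zero => simp
      | succ i ih =>
        rw [pow_succ', Module.End.mul_apply, ih, push_cone, push_cone, push_shiftLabel_pairCycle]
        simp [shiftLabel]
    simp only [orbitSum, LinearMap.sum_apply, this]
    rw [pairCycle, pairSum_apply]
    refine Finset.sum_nbij' (fun i : ZMod p => i.val) (fun i : ℕ => (i : ZMod p)) ?_ ?_ ?_ ?_ ?_
    · intro i _; simpa using ZMod.val_lt i
    · simp
    · intro i _; simp
    · intro i hi; exact ZMod.val_cast_of_lt (by simpa using hi)
    · intro i _; simp

/-- The lists having in row `k` at most two entries for every `i < j` with `κ i = k`. -/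
def rowBounded (p : ℕ) [DecidableEq K] (κ : ℕ → K) (j : ℕ) : Set (List (ZMod p × K)) :=
  {l | ∀ k, l.countP (fun x => x.2 = k) ≤ 2 * ((Finset.range j).filter fun i => κ i = k).card}

theorem cons_cons_mem_rowBounded {p : ℕ} [DecidableEq K] {κ : ℕ → K} {j : ℕ}
    {l : List (ZMod p × K)} (hl : l ∈ rowBounded p κ j) (a b : ZMod p) :
    (a, κ j) :: (b, κ j) :: l ∈ rowBounded p κ (j + 1) := by
  intro k
  have := hl k
  simp only [List.countP_cons, Finset.range_add_one, Finset.filter_insert]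
  by_cases h : κ j = k <;> simp [h] <;> omega

theorem cons_mem_rowBounded {p : ℕ} [DecidableEq K] {κ : ℕ → K} {j : ℕ}
    {l : List (ZMod p × K)} (hl : l ∈ rowBounded p κ j) (a : ZMod p) : (a, κ j) :: l ∈ rowBounded p κ (j + 1) := by
  intro k
  have := cons_cons_mem_rowBounded hl a a k
  rw [List.countP_cons] at this
  simp only [List.countP_cons] at this ⊢
  omega

/-- Every list in `pairCycle` has few entries in each row. -/
theorem pairCycle_mem_supported [DecidableEq K] (κ : ℕ → K) (j : ℕ) :
    pairCycle F p κ j ∈ Finsupp.supported F F (rowBounded p κ j) := by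
  induction j with
  | zero => exact Finsupp.single_mem_supported _ _ (by simp [rowBounded])
  | succ j ih =>
    rw [pairCycle, pairSum_apply]
    refine Submodule.sum_mem _ fun i _ => ?_
    exact cone_mem_supported (S := {l | (i, κ j) :: l ∈ rowBounded p κ (j + 1)}) (fun l hl => hl)
      (cone_mem_supported (fun l hl => cons_cons_mem_rowBounded hl _ _) ih)

end Pairs

section Evaluation

variable {F : Type*} [CommRing F] {p : ℕ} [NeZero p]

/-- The list obtained by replacing each `i` by the consecutive entries `i`, `i + 1`. -/
def pairList {R : Type*} [Add R] [One R] : List R → List R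
  | [] => []
  | i :: l => i :: (i + 1) :: pairList l

theorem mem_pairList {R : Type*} [Add R] [One R] {x : R} {l : List R} :
    x ∈ pairList l ↔ ∃ i ∈ l, x = i ∨ x = i + 1 := by
  induction l with
  | nil => simp [pairList]
  | cons i l ih => simp [pairList, ih, or_assoc]

theorem length_pairList {R : Type*} [Add R] [One R] (l : List R) :
    (pairList l).length = 2 * l.length := by
  induction l with
  | nil => rfl
  | cons i l ih => simp [pairList, ih]; ring

theorem pairList_append {R : Type*} [Add R] [One R] (l l' : List R) :
    pairList (l ++ l') = pairList l ++ pairList l' := by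
  induction l with
  | nil => rfl
  | cons i l ih => simp [pairList, ih]

theorem pairList_perm {R : Type*} [CommRing R] {l l' : List R} (h : l.Perm l') :
    (pairList l).Perm (pairList l') ∧ vandermonde (pairList l) = vandermonde (pairList l') := by
  have hcons : ∀ (x : R) {m m' : List R}, m.Perm m' → vandermonde m = vandermonde m' →
      vandermonde (x :: m) = vandermonde (x :: m') := fun x m m' h e => by
    rw [vandermonde, vandermonde, e, (h.map _).prod_eq]
  induction h with
  | nil => exact ⟨List.Perm.refl _, rfl⟩
  | cons x _ ih =>
    exact ⟨(ih.1.cons _).cons _, hcons _ (ih.1.cons _) (hcons _ ih.1 ih.2)⟩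
  | swap x y l =>
    constructor
    · have h : ([y, y + 1] ++ [x, x + 1]).Perm ([x, x + 1] ++ [y, y + 1]) :=
        List.perm_append_comm
      exact h.append_right (pairList l)
    · simp only [pairList, vandermonde, List.map_cons, List.prod_cons]
      ring
  | trans _ _ h1 h2 => exact ⟨h1.1.trans h2.1, h1.2.trans h2.2⟩

theorem vandermonde_cons_pairList_perm {R : Type*} [CommRing R] (x : R) {l l' : List R}
    (h : l.Perm l') : vandermonde (x :: pairList l) = vandermonde (x :: pairList l') := by
  rw [vandermonde, vandermonde, (pairList_perm h).2, ((pairList_perm h).1.map _).prod_eq]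

/-- The sum of all lists made of `m` consecutive pairs. -/
theorem push_fst_pairCycle {K : Type*} (κ : ℕ → K) (m : ℕ) :
    push Prod.fst (pairCycle F p κ m) =
      ∑ i : Fin m → ZMod p, Finsupp.single (pairList (List.ofFn i)) (1 : F) := by
  induction m with
  | zero => simp [pairCycle, pairList]
  | succ m ih =>
    rw [pairCycle, pairSum_apply, map_sum]
    simp only [push_cone, ih, map_sum, cone_single]
    rw [← Equiv.sum_comp (Fin.consEquiv fun _ => ZMod p), Fintype.sum_prod_type]
    simp [Fin.consEquiv, List.ofFn_succ, pairList]

/-- The list `0, 1, …, 2 n` as a list of consecutive pairs. -/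
theorem cons_pairList_odd (p n : ℕ) :
    (0 : ZMod p) :: pairList (List.ofFn fun t : Fin n => ((2 * t + 1 : ℕ) : ZMod p)) =
      (List.range (2 * n + 1)).map Nat.cast := by
  induction n with
  | zero => simp [pairList]
  | succ n ih =>
    rw [List.ofFn_succ_last, pairList_append, ← List.cons_append]
    simp only [Fin.val_castSucc, Fin.val_last]
    rw [ih, show 2 * (n + 1) + 1 = 2 * n + 1 + 1 + 1 by ring, List.range_succ (n := 2 * n + 1 + 1),
      List.range_succ (n := 2 * n + 1)]
    simp [pairList]

theorem exists_perm_of_nodup {m : ℕ} (hp : p = 2 * m + 1) {i : Fin m → ZMod p}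
    (h : (0 :: pairList (List.ofFn i)).Nodup) :
    ∃ σ : Equiv.Perm (Fin m), i = (fun t : Fin m => ((2 * t + 1 : ℕ) : ZMod p)) ∘ σ := by
  have hmem : ∀ x : ZMod p, x ∈ 0 :: pairList (List.ofFn i) := by
    intro x
    have : (0 :: pairList (List.ofFn i)).toFinset = Finset.univ :=
      Finset.eq_univ_of_card _ (by
        rw [List.toFinset_card_of_nodup h, ZMod.card]
        simp [length_pairList, hp])
    rw [← List.mem_toFinset, this]
    exact Finset.mem_univ x
  have hne0 : ∀ x : ZMod p, x ∈ pairList (List.ofFn i) → x ≠ 0 := by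
    rintro x hx rfl
    exact (List.nodup_cons.1 h).1 hx
  have hcross : ∀ s t, i s ≠ i t + 1 := by
    have : ∀ l : List (ZMod p), (pairList l).Nodup → ∀ a ∈ l, ∀ b ∈ l, a ≠ b + 1 := by
      intro l
      induction l with
      | nil => simp
      | cons c l ih =>
        intro hl a ha b hb e
        rw [pairList, List.nodup_cons, List.nodup_cons] at hl
        obtain ⟨h1, h2, h3⟩ := hl
        rw [List.mem_cons, not_or] at h1
        rcases List.mem_cons.1 ha with rfl | ha' <;> rcases List.mem_cons.1 hb with rfl | hb'
        · exact h1.1 e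
        · exact h1.2 (mem_pairList.2 ⟨b, hb', Or.inr e⟩)
        · exact h2 (mem_pairList.2 ⟨a, ha', Or.inl e.symm⟩)
        · exact ih h3 a ha' b hb' e
    intro s t
    exact this _ (List.nodup_cons.1 h).2 _ (by simp) _ (by simp)
  have hsurj : ∀ t, t < m → ∃ s, i s = ((2 * t + 1 : ℕ) : ZMod p) := by
    intro t
    induction t with
    | zero =>
      intro ht
      have h1 := hmem ((2 * 0 + 1 : ℕ) : ZMod p)
      have hlt : 1 < p := by omega
      rcases List.mem_cons.1 h1 with e | h1
      · have : Fact (1 < p) := ⟨hlt⟩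
        simp at e
      obtain ⟨x, hx, e⟩ := mem_pairList.1 h1
      obtain ⟨s, rfl⟩ := (List.mem_ofFn' _ _).1 hx
      rcases e with e | e
      · exact ⟨s, e.symm⟩
      · have : i s = 0 := by simpa using e.symm
        exact absurd this (hne0 _ (mem_pairList.2 ⟨_, hx, Or.inl rfl⟩))
    | succ t ih =>
      intro ht
      obtain ⟨s', hs'⟩ := ih (by omega)
      have h1 := hmem ((2 * (t + 1) + 1 : ℕ) : ZMod p)
      rcases List.mem_cons.1 h1 with e | h1
      · rw [ZMod.natCast_eq_zero_iff] at e
        exact absurd (Nat.le_of_dvd (by omega) e) (by omega)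
      obtain ⟨x, hx, e⟩ := mem_pairList.1 h1
      obtain ⟨s, rfl⟩ := (List.mem_ofFn' _ _).1 hx
      rcases e with e | e
      · exact ⟨s, e.symm⟩
      · refine absurd ?_ (hcross s s')
        rw [hs']
        push_cast at e ⊢
        linear_combination -e
  choose s hs using hsurj
  have hinj : Function.Injective fun t : Fin m => s t t.2 := by
    intro t t' e
    have e' : ((2 * t + 1 : ℕ) : ZMod p) = ((2 * t' + 1 : ℕ) : ZMod p) := by
      rw [← hs t t.2, ← hs t' t'.2]
      exact congrArg i e
    rw [ZMod.natCast_eq_natCast_iff', Nat.mod_eq_of_lt (by omega),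
      Nat.mod_eq_of_lt (by omega)] at e'
    exact Fin.ext (by omega)
  refine ⟨(Equiv.ofBijective _ (Finite.injective_iff_bijective.1 hinj)).symm, ?_⟩
  rw [Equiv.eq_comp_symm]
  ext1 t
  exact hs t t.2

theorem pairList_map_add {R : Type*} [CommRing R] (a : R) (l : List R) :
    pairList (l.map (· + a)) = (pairList l).map (· + a) := by
  induction l with
  | nil => rfl
  | cons i l ih => simp [pairList, ih, add_right_comm]

theorem ev_vandermondeCochain_cone {m : ℕ} (hp : p = 2 * m + 1) {K : Type*}
    (κ : ℕ → K) (a : ZMod p) :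
    ev (vandermondeCochain p) (cone a (push Prod.fst (pairCycle (ZMod p) p κ m))) =
      ∑ i : Fin m → ZMod p, vandermonde (0 :: pairList (List.ofFn i)) := by
  rw [push_fst_pairCycle, map_sum, map_sum, ← Equiv.sum_comp (Equiv.addRight fun _ => a)]
  refine Finset.sum_congr rfl fun i _ => ?_
  have : a :: pairList (List.ofFn (i + fun _ => a)) =
      (0 :: pairList (List.ofFn i)).map (· + a) := by
    rw [List.map_cons, zero_add, ← pairList_map_add, List.map_ofFn]
    rfl
  rw [Equiv.coe_addRight, cone_single, ev_single, this, vandermondeCochain, if_pos,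
    vandermonde_map_add]
  simp [length_pairList, hp]

theorem ev_vandermondeCochain_ne_zero [Fact p.Prime] {m : ℕ} (hp : p = 2 * m + 1) {K : Type*}
    (κ : ℕ → K) (a : ZMod p) :
    ev (vandermondeCochain p) (cone a (push Prod.fst (pairCycle (ZMod p) p κ m))) ≠ 0 := by
  classical
  set j₀ : Fin m → ZMod p := fun t => ((2 * t + 1 : ℕ) : ZMod p) with hj₀
  have hj₀inj : Function.Injective j₀ := by
    intro t t' e
    rw [hj₀] at e
    simp only at e
    rw [ZMod.natCast_eq_natCast_iff', Nat.mod_eq_of_lt (by omega),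
      Nat.mod_eq_of_lt (by omega)] at e
    exact Fin.ext (by omega)
  have hperm : ∑ i : Fin m → ZMod p, vandermonde (0 :: pairList (List.ofFn i)) =
      ∑ σ : Equiv.Perm (Fin m), vandermonde (0 :: pairList (List.ofFn (j₀ ∘ σ))) := by
    symm
    refine Finset.sum_of_injOn (fun σ => j₀ ∘ σ) ?_ (by simp) ?_ (fun _ _ => rfl)
    · intro σ _ τ _ e
      ext1 t
      exact hj₀inj (congrFun e t)
    · intro i _ hi
      refine vandermonde_eq_zero fun h => hi ?_
      obtain ⟨σ, hσ⟩ := exists_perm_of_nodup hp h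
      exact ⟨σ, by simp, hσ.symm⟩
  have hconst : ∀ σ : Equiv.Perm (Fin m), vandermonde (0 :: pairList (List.ofFn (j₀ ∘ σ))) =
      vandermonde (0 :: pairList (List.ofFn j₀)) := fun σ =>
    vandermonde_cons_pairList_perm 0 (Equiv.Perm.ofFn_comp_perm σ j₀)
  rw [ev_vandermondeCochain_cone hp, hperm, Finset.sum_congr rfl fun σ _ => hconst σ, Finset.sum_const,
    Finset.card_univ, Fintype.card_perm, Fintype.card_fin, nsmul_eq_mul]
  refine mul_ne_zero ?_ (vandermonde_ne_zero ?_)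
  · rw [Ne, ZMod.natCast_eq_zero_iff, (Fact.out : p.Prime).dvd_factorial]
    omega
  · rw [hj₀, cons_pairList_odd]
    refine List.Nodup.map_on ?_ List.nodup_range
    intro x hx y hy e
    rw [List.mem_range] at hx hy
    rwa [ZMod.natCast_eq_natCast_iff', Nat.mod_eq_of_lt (by omega),
      Nat.mod_eq_of_lt (by omega)] at e

/-- Prepend two consecutive entries in all possible ways. -/
noncomputable def consecutive (F : Type*) [CommRing F] (p : ℕ) [NeZero p] :
    Module.End F (ListChain F (ZMod p)) :=
  ∑ i : ZMod p, cone i ∘ₗ cone (i + 1)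

theorem push_fst_pairCycle_eq_pow {K : Type*} (κ : ℕ → K) (j : ℕ) :
    push Prod.fst (pairCycle F p κ j) = (consecutive F p ^ j) (Finsupp.single [] 1) := by
  induction j with
  | zero => simp [pairCycle]
  | succ j ih =>
    rw [pairCycle, pairSum_apply, map_sum, pow_succ', Module.End.mul_apply, ← ih]
    simp [consecutive, push_cone]

theorem ev_cup_cone_pow {g : List (ZMod p) → F} {γ : F} {x : ListChain F (ZMod p)}
    (hg : ∀ b, ev g (cone b x) = γ) (m : ℕ) (f : List (ZMod p) → F) (a : ZMod p) :
    ev (cup (2 * m) f g) (cone a ((consecutive F p ^ m) x)) =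
      ev f (cone a ((consecutive F p ^ m) (Finsupp.single [] 1))) * γ := by
  induction m generalizing f a with
  | zero =>
    simp only [mul_zero, pow_zero, Module.End.one_apply, ev_cone, cup_zero_cons, ev_mul_left,
      ev_single]
    rw [← ev_cone, hg]
  | succ m ih =>
    have hstep : ∀ y : ListChain F (ZMod p), consecutive F p y =
        ∑ i : ZMod p, cone i (cone (i + 1) y) := fun y => by simp [consecutive]
    rw [pow_succ', Module.End.mul_apply, Module.End.mul_apply, hstep, hstep]
    simp only [map_sum, Finset.sum_mul]
    refine Finset.sum_congr rfl fun i _ => ?_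
    rw [ev_cone (cup _ _ _), ev_cone, ev_cone f, ev_cone _ i]
    exact ih (fun l => f (a :: i :: l)) (i + 1)

theorem ev_rowCochain_pairCycle {m : ℕ} (hp : p = 2 * m + 1) {K : Type*} (κ : ℕ → K) (d : ℕ)
    (a : ZMod p) :
    ev (rowCochain (ZMod p) (2 * m) d) (cone (fun _ => a)
      (push (fun x _ => x.1) (pairCycle (ZMod p) p κ (d * m)))) =
      ev (vandermondeCochain p) (cone 0 (push Prod.fst (pairCycle (ZMod p) p κ m))) ^ d := by
  have hpush : ∀ x : ListChain (ZMod p) (ZMod p × K), cone (fun _ : ℕ => a)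
      (push (fun x (_ : ℕ) => x.1) x) = push (fun i _ => i) (cone a (push Prod.fst x)) := by
    intro x
    rw [push_cone, push_push]
    rfl
  rw [hpush, ev_push]
  induction d generalizing a with
  | zero => simp [rowCochain, pairCycle]
  | succ d ih =>
    have ih' := fun b => ih b fun x => by rw [push_cone, push_push]; rfl
    have hcup : (fun l : List (ZMod p) => rowCochain (ZMod p) (2 * m) (d + 1)
        (l.map fun i _ => i)) = cup (2 * m) (vandermondeCochain p)
          (fun l => rowCochain (ZMod p) (2 * m) d (l.map fun i _ => i)) := by
      ext l
      rw [rowCochain, cup_map]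
      simp [← hp, Function.comp_def]
    rw [hcup, push_fst_pairCycle_eq_pow, add_mul, one_mul, add_comm, pow_add,
      Module.End.mul_apply, ← push_fst_pairCycle_eq_pow κ (d * m), ev_cup_cone_pow ih',
      ← push_fst_pairCycle_eq_pow κ, ev_vandermondeCochain_cone hp, ev_vandermondeCochain_cone hp]
    ring

end Evaluation

section Labelling

variable {p : ℕ} {K : Type*}

/-- The vertex of the cross-polytope with label `y`. -/
noncomputable def vertex [DecidableEq K] (y : ZMod p × K) : ZMod p × K → ℝ := Pi.single y (1 / 2)

/-- The cyclic shift of the rows. -/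
def rowShift : (ZMod p × K → ℝ) →ₗ[ℝ] (ZMod p × K → ℝ) :=
  LinearMap.funLeft ℝ ℝ fun y => (y.1 - 1, y.2)

/-- Subtract the zeroth row from all rows. -/
def subRow : (ZMod p × K → ℝ) →ₗ[ℝ] (ZMod p × K → ℝ) :=
  LinearMap.id - LinearMap.funLeft ℝ ℝ fun y => (0, y.2)

/-- The matrices whose rows are not all equal, one of the rows lying in the open unit cube. -/
def smallRow (p : ℕ) (K : Type*) : Set (ZMod p × K → ℝ) :=
  {x | subRow x ≠ 0 ∧ ∃ i, ∀ k, |x (i, k)| < 1}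

/-- The matrices with entries in the open unit interval whose rows are not all equal. -/
def smallEntries (p : ℕ) (K : Type*) : Set (ZMod p × K → ℝ) :=
  {x | subRow x ≠ 0 ∧ ∀ y, |x y| < 1}

theorem rowShift_apply (x : ZMod p × K → ℝ) (i : ZMod p) (k : K) :
    rowShift x (i, k) = x (i - 1, k) := rfl

theorem subRow_apply (x : ZMod p × K → ℝ) (i : ZMod p) (k : K) :
    subRow x (i, k) = x (i, k) - x (0, k) := rfl

theorem subRow_eq_zero_iff {x : ZMod p × K → ℝ} :
    subRow x = 0 ↔ ∀ i j k, x (i, k) = x (j, k) := by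
  refine ⟨fun h i j k => ?_, fun h => ?_⟩
  · have h1 := congrFun h (i, k)
    have h2 := congrFun h (j, k)
    rw [subRow_apply, Pi.zero_apply] at h1 h2
    linarith
  · ext ⟨i, k⟩
    rw [subRow_apply, h i 0 k, sub_self, Pi.zero_apply]

theorem rowShift_vertex [DecidableEq K] (y : ZMod p × K) :
    rowShift (vertex y) = vertex (shiftLabel y) := by
  ext ⟨i, k⟩
  simp only [rowShift_apply, vertex, shiftLabel, Pi.single_apply, Prod.ext_iff, sub_eq_iff_eq_add]

theorem rowShift_mem_smallRow {x : ZMod p × K → ℝ} (hx : x ∈ smallRow p K) :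
    rowShift x ∈ smallRow p K := by
  obtain ⟨h, i, hi⟩ := hx
  refine ⟨fun h0 => h (subRow_eq_zero_iff.2 fun i j k => ?_), i + 1, fun k => ?_⟩
  · have := subRow_eq_zero_iff.1 h0 (i + 1) (j + 1) k
    simpa [rowShift_apply] using this
  · simpa [rowShift_apply] using hi k

theorem smallEntries_subset : smallEntries p K ⊆ smallRow p K :=
  fun _ h => ⟨h.1, 0, fun k => h.2 (0, k)⟩

theorem exists_notMem_of_countP_lt [NeZero p] [DecidableEq K] {l : List (ZMod p × K)}
    {k : K} (h : l.countP (fun x => x.2 = k) < p) : ∃ i, (i, k) ∉ l := by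
  by_contra! hl
  have h1 : (Finset.univ.image fun i : ZMod p => (i, k)) ⊆
      (l.filter fun x => x.2 = k).toFinset := by
    intro x hx
    obtain ⟨i, -, rfl⟩ := Finset.mem_image.1 hx
    simp [hl i]
  have h2 := (Finset.card_le_card h1).trans (List.toFinset_card_le _)
  rw [Finset.card_image_of_injective _ (fun a b h => congrArg Prod.fst h), Finset.card_univ,
    ZMod.card, ← List.countP_eq_length_filter] at h2
  omega

theorem convexHull_vertex_subset [NeZero p] [Fintype K] [DecidableEq K]
    {l : List (ZMod p × K)} (hl : ∀ k, ∃ i, (i, k) ∉ l) :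
    convexHull ℝ {x | x ∈ l.map vertex} ⊆ smallEntries p K := by
  choose i hi using hl
  have h1 : convexHull ℝ {x | x ∈ l.map vertex} ⊆
      {x : ZMod p × K → ℝ | (∀ k, x (i k, k) = 0) ∧ (∀ y, |x y| ≤ 1 / 2) ∧ ∑ y, x y = 1 / 2} := by
    refine convexHull_min ?_ ?_
    · intro x hx
      obtain ⟨y, hy, rfl⟩ := List.mem_map.1 hx
      refine ⟨fun k => Pi.single_eq_of_ne (fun e => hi k (by rw [e]; exact hy)) _, fun y' => ?_, ?_⟩
      · by_cases e : y' = y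
        · simp [vertex, e]
        · rw [vertex, Pi.single_eq_of_ne e]; norm_num
      · simp [vertex]
    · rintro x ⟨hx1, hx2, hx3⟩ y ⟨hy1, hy2, hy3⟩ a b ha hb hab
      refine ⟨fun k => by simp [hx1 k, hy1 k], fun z => ?_, ?_⟩
      · have h1 := abs_le.1 (hx2 z)
        have h2 := abs_le.1 (hy2 z)
        simp only [Pi.add_apply, Pi.smul_apply, smul_eq_mul]
        exact abs_le.2 ⟨by nlinarith, by nlinarith⟩
      · simp only [Pi.add_apply, Pi.smul_apply, smul_eq_mul, Finset.sum_add_distrib,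
          ← Finset.mul_sum, hx3, hy3, ← add_mul, hab, one_mul]
  intro x hx
  obtain ⟨h2, h3, h4⟩ := h1 hx
  refine ⟨fun h0 => ?_, fun y => (h3 y).trans_lt (by norm_num)⟩
  have : ∑ y, x y = 0 := Finset.sum_eq_zero fun y _ => by
    rw [subRow_eq_zero_iff.1 h0 y.1 (i y.2) y.2, h2]
  norm_num [this] at h4

end Labelling

section Divide

/-- The rows in which pairs are added: each row is used `m` times. -/
def divRow (m d : ℕ) [NeZero d] (j : ℕ) : Fin d :=
  if h : j / m < d then ⟨j / m, h⟩ else 0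

theorem card_divRow_le {m d : ℕ} [NeZero d] {j : ℕ} (hj : j ≤ d * m) (k : Fin d) :
    ((Finset.range j).filter fun i => divRow m d i = k).card ≤ m := by
  have : ((Finset.range j).filter fun i => divRow m d i = k) ⊆
      Finset.Ico (k * m) (k * m + m) := by
    intro i hi
    rw [Finset.mem_filter, Finset.mem_range] at hi
    have him : i < d * m := by omega
    have hm : 0 < m := Nat.pos_of_ne_zero (by rintro rfl; simp at him)
    have hdiv : i / m < d := (Nat.div_lt_iff_lt_mul hm).2 him
    have hk : i / m = k := by
      rw [← hi.2, divRow, dif_pos hdiv]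
    rw [Finset.mem_Ico, ← hk]
    have h1 := Nat.div_add_mod i m
    have h2 := Nat.mod_lt i hm
    rw [mul_comm] at h1
    omega
  simpa using Finset.card_le_card this

theorem rowBounded_map_vertex {p m d : ℕ} [NeZero p] [NeZero d] (hp : p = 2 * m + 1) {j : ℕ}
    (hj : j ≤ d * m) {l : List (ZMod p × Fin d)} (hl : l ∈ rowBounded p (divRow m d) j) :
    convexHull ℝ {x | x ∈ l.map vertex} ⊆ smallEntries p (Fin d) :=
  convexHull_vertex_subset fun k => exists_notMem_of_countP_lt (by
    have := hl k
    have := card_divRow_le hj k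
    omega)

theorem push_vertex_mem_inside {F : Type*} [CommRing F] {p m d : ℕ} [NeZero p] [NeZero d]
    (hp : p = 2 * m + 1) {j : ℕ} (hj : j ≤ d * m) {c : ListChain F (ZMod p × Fin d)}
    (hc : c ∈ Finsupp.supported F F (rowBounded p (divRow m d) j)) :
    push vertex c ∈ inside F (smallEntries p (Fin d)) := by
  refine map_mem_of_supported (push vertex) (fun l hl => ?_) hc
  rw [push_single]
  exact single_mem_inside (rowBounded_map_vertex hp hj hl) _

end Divide

section NoLabelling

variable {p d : ℕ}

theorem prism_subRow_mem_inside {F : Type*} [CommRing F] {K : Type*}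
    {c : ListChain F (ZMod p × K → ℝ)} (hc : c ∈ inside F (smallEntries p K)) :
    prism (subRow.toAffineMap : (ZMod p × K → ℝ) →ᵃ[ℝ] _) (AffineMap.id ℝ _) c ∈
      inside F (smallRow p K) := by
  refine prism_mem_inside _ _ ?_ hc
  rintro x y h _ ⟨a, b, ha, hb, hab, rfl⟩
  have hz := h ⟨a, b, ha, hb, hab, rfl⟩
  have hy := h (right_mem_segment ℝ x y)
  have hidem : subRow (subRow x) = subRow x := by
    ext ⟨i, k⟩
    simp [subRow_apply]
  refine ⟨?_, 0, fun k => ?_⟩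
  · have := hz.1
    simp only [map_add, map_smul] at this
    simpa only [map_add, map_smul, LinearMap.coe_toAffineMap, hidem, AffineMap.id_apply] using this
  · have h0 := abs_lt.1 (hy.2 (0, k))
    simp only [LinearMap.coe_toAffineMap, AffineMap.id_apply, Pi.add_apply, Pi.smul_apply,
      subRow_apply, sub_self, smul_eq_mul, mul_zero, zero_add]
    exact abs_lt.2 ⟨by nlinarith, by nlinarith⟩

theorem sd_iterate_nil {F E : Type*} [CommRing F] [AddCommGroup E] [Module ℝ E] (n : ℕ) :
    sd^[n] (Finsupp.single ([] : List E) (1 : F)) = Finsupp.single [] 1 :=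
  Function.iterate_fixed (baryCone_nil 1 0 1) n

/-- There is no equivariant labelling of the small matrices that is glued along opposite faces of
cubes and locally omits a label in some row. -/
theorem no_labelling [NeZero p] [Fact p.Prime] {m : ℕ} (hp : p = 2 * m + 1) (hd : 1 ≤ d)
    (L : (ZMod p × Fin d → ℝ) → ℕ → ZMod p)
    (hL : ∀ x ∈ smallRow p (Fin d), L (rowShift x) = fun k => L x k + 1)
    {A : Type*} (O : A → Set (ZMod p × Fin d → ℝ)) (hO : ∀ a, IsOpen (O a))
    (hcov : smallRow p (Fin d) ⊆ ⋃ a, O a)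
    (homit : ∀ a, ∃ k < d, ∃ i, ∀ x ∈ O a, x ∈ smallRow p (Fin d) → L x k ≠ i)
    (hglue : ∀ x : ZMod p × Fin d → ℝ, ∀ y, y.1 ≠ 0 → x y = 0 →
      L (x + Pi.single y 1) = L (x + Pi.single y (-1))) : False := by
  classical
  have : NeZero d := ⟨by omega⟩
  have hp1 : (1 : ZMod p) ≠ 0 := one_ne_zero
  set κ := divRow m d with hκ
  set E := ev (rowCochain (ZMod p) (2 * m) d) with hEdef
  have hE : ∀ x, E (bd x) = 0 := fun x => ev_bd_eq_zero (ev_rowCochain_bdList _ _) x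
  have hE' : ∀ x, E (push (fun (v : ℕ → ZMod p) k => v k + 1) x) = E x := fun x => by
    rw [hEdef, ev_push]
    congr 2
    exact funext fun l => rowCochain_map _ _ _ _
  have hT : (fun (v : ℕ → ZMod p) (k : ℕ) => v k + 1)^[p] = id := by
    have : ∀ n : ℕ, (fun (v : ℕ → ZMod p) (k : ℕ) => v k + 1)^[n] =
        fun (v : ℕ → ZMod p) (k : ℕ) => v k + (n : ZMod p) := by
      intro n
      induction n with
      | zero => ext; simp
      | succ n ih => rw [Function.iterate_succ', ih]; ext; simp [add_assoc]
    rw [this]; ext; simp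
  have hshift : ∀ x ∈ inside (ZMod p) (smallRow p (Fin d)),
      push rowShift x ∈ inside (ZMod p) (smallRow p (Fin d)) := fun x hx =>
    push_mem_inside rowShift.toAffineMap (fun x hx => rowShift_mem_smallRow hx) hx
  -- the tower of chains in the space of matrices
  have hz : ∀ j ≤ d * m, push vertex (pairCycle (ZMod p) p κ j) ∈
      inside (ZMod p) (smallEntries p (Fin d)) := fun j hj =>
    push_vertex_mem_inside hp hj (pairCycle_mem_supported κ j)
  have hc : ∀ j < d * m, push vertex (cone (0, κ j) (pairCycle (ZMod p) p κ j)) ∈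
      inside (ZMod p) (smallEntries p (Fin d)) := fun j hj =>
    push_vertex_mem_inside hp hj (cone_mem_supported (fun l hl => cons_mem_rowBounded hl _)
      (pairCycle_mem_supported κ j))
  have ha : ∀ j < d * m, push vertex (cone (0, κ j) (cone (1, κ j) (pairCycle (ZMod p) p κ j))) ∈
      inside (ZMod p) (smallEntries p (Fin d)) := fun j hj => by
    refine push_vertex_mem_inside hp hj (cone_mem_supported
      (S := {l | (0, κ j) :: l ∈ rowBounded p κ (j + 1)}) (fun l hl => hl)
      (cone_mem_supported (fun l hl => ?_) (pairCycle_mem_supported κ j)))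
    exact cons_cons_mem_rowBounded hl _ _
  set z := push vertex (pairCycle (ZMod p) p κ (d * m)) with hzdef
  have hbdz : bd z = 0 := by rw [hzdef, bd_push, bd_pairCycle, map_zero]
  -- comparison with the cube
  set s : Finset (ZMod p × Fin d) := Finset.univ.filter fun y => y.1 ≠ 0 with hs
  have hsne : s.Nonempty := ⟨(1, 0), by simp [hs, hp1]⟩
  obtain ⟨C, -, hC, -, hC', hgen⟩ := exists_cube (ZMod p) s
  have hsub : (coordSpace s : Set (ZMod p × Fin d → ℝ)) \ {0} ⊆ smallRow p (Fin d) := by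
    rintro x ⟨hx, hx0⟩
    have h0 : ∀ k, x (0, k) = 0 := fun k => hx _ (by simp [hs])
    refine ⟨fun h => hx0 ?_, 0, fun k => by simp [h0]⟩
    ext ⟨i, k⟩
    rw [subRow_eq_zero_iff.1 h i 0 k, h0, Pi.zero_apply]
  have hπz : push subRow z ∈
      inside (ZMod p) ((coordSpace s : Set (ZMod p × Fin d → ℝ)) \ {0}) := by
    refine push_mem_inside subRow.toAffineMap (fun x hx => ?_) (hz _ le_rfl)
    refine ⟨?_, hx.1⟩
    rintro ⟨i, k⟩ hi
    have : i = 0 := by simpa [hs] using hi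
    simp [this, subRow_apply]
  obtain ⟨a, g, hg, hag⟩ := hgen _ hπz (by rw [bd_push, hbdz, map_zero])
  set g' := g + prism subRow.toAffineMap (AffineMap.id ℝ _) z with hg'def
  have hg' : g' ∈ inside (ZMod p) (smallRow p (Fin d)) :=
    add_mem (inside_mono hsub hg) (prism_subRow_mem_inside (hz _ le_rfl))
  have hza : z = a • bd C + bd g' := by
    have := bd_prism (F := ZMod p) (subRow.toAffineMap : (ZMod p × Fin d → ℝ) →ᵃ[ℝ] _)
      (AffineMap.id ℝ _) z
    rw [hbdz, map_zero, sub_zero, LinearMap.coe_toAffineMap, hag] at this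
    rw [hg'def, map_add, LinearMap.coe_toAffineMap, this, AffineMap.coe_id, push_id]
    abel
  obtain ⟨n, hn⟩ := exists_sd_iterate_small O hO hcov hg'
  have hzero : E (cone 0 (push L (sd^[n] z))) = 0 := by
    rw [hza, sd_iterate_eq_pow, map_add, map_smul, ← sd_iterate_eq_pow, ← sd_iterate_eq_pow,
      map_add, map_smul, push_sd_iterate_eq_zero (fun j hj v hv => hglue v j
        (by simpa [hs] using hj) hv) (hC' hsne), smul_zero, zero_add, ← bd_sd_iterate, ← bd_push,
      ← apply_eq_apply_cone_bd hE, hEdef, ev_push]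
    refine ev_eq_zero (fun l hl => ?_) (hn n le_rfl)
    obtain ⟨hl, rfl | ⟨b, hb⟩⟩ := hl
    · exact rowCochain_nil _ _
    · obtain ⟨k, hk, i, hi⟩ := homit b
      refine rowCochain_eq_zero (by rw [ZMod.card, hp]) hk (i := i) fun v hv => ?_
      obtain ⟨x, hx, rfl⟩ := List.mem_map.1 hv
      have hx' := subset_convexHull ℝ {x | x ∈ l} hx
      exact hi x (hb hx') (hl hx')
  have hin : ∀ {c : ListChain (ZMod p) (ZMod p × Fin d → ℝ)},
      c ∈ inside (ZMod p) (smallEntries p (Fin d)) →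
      (sd ^ n) c ∈ inside (ZMod p) (smallRow p (Fin d)) := fun hc => by
    rw [← sd_iterate_eq_pow]
    exact sd_iterate_mem_inside (inside_mono smallEntries_subset hc) n
  have tower := isTower_pairCycle (F := ZMod p) (p := p) κ (d * m)
  have tower₁ := ((tower.map (push vertex) (fun x => (bd_push _ _).symm)
    (T' := rowShift) fun x => by
      rw [push_push, push_push]
      congr 2
      exact funext fun y => (rowShift_vertex y).symm).map (sd ^ n) (fun x => by
        rw [← sd_iterate_eq_pow, ← sd_iterate_eq_pow, bd_sd_iterate]) (T' := rowShift)
      fun x => by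
        rw [← sd_iterate_eq_pow, ← sd_iterate_eq_pow]
        exact (push_sd_iterate rowShift.toAffineMap n x).symm).map_of_mem (push L)
      (fun x => (bd_push _ _).symm) (T' := fun v k => v k + 1) hshift (fun x hx => by
        rw [push_push, push_push]
        refine map_eq_of_supported (push _) (push _) (fun l hl => ?_) hx
        rw [push_single, push_single]
        congr 1
        exact List.map_congr_left fun v hv => hL v (hl (subset_convexHull ℝ _ hv)))
      (fun j hj => hin (hc j hj)) (fun j hj => hin (ha j hj))
  have tower₂ := tower.map (push fun x (_ : ℕ) => x.1) (fun x => (bd_push _ _).symm)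
    (T' := fun v k => v k + 1) fun x => by
      rw [push_push, push_push]
      rfl
  have key := tower₁.apply_cone_eq hT (by simp) 0 tower₂ (by
    simp [pairCycle, sd_iterate_nil, ← sd_iterate_eq_pow]) hE hE'
  rw [← sd_iterate_eq_pow, hzero] at key
  refine pow_ne_zero d (ev_vandermondeCochain_ne_zero hp κ 0) ?_
  rw [← ev_rowCochain_pairCycle hp κ d 0]
  exact key.symm

end NoLabelling

section Collapse

variable {d : ℕ}

/-- Un-normalized version of `collapse`. -/
noncomputable def collapseAux (y : Fin d → ℝ) : EuclideanSpace ℝ (Fin (d + 1)) :=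
  WithLp.toLp 2 (Fin.cons (‖y‖ - 1 / 2) (max 0 (1 - ‖y‖) • y))

theorem collapseAux_zero (y : Fin d → ℝ) : collapseAux y 0 = ‖y‖ - 1 / 2 := rfl

theorem collapseAux_succ (y : Fin d → ℝ) (k : Fin d) :
    collapseAux y k.succ = max 0 (1 - ‖y‖) * y k := rfl

theorem collapseAux_ne_zero (y : Fin d → ℝ) : collapseAux y ≠ 0 := by
  intro h
  have h0 : ‖y‖ - 1 / 2 = 0 := by rw [← collapseAux_zero, h]; rfl
  have hy : ‖y‖ = 1 / 2 := by linarith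
  have : y = 0 := by
    ext k
    have h1 : max 0 (1 - ‖y‖) * y k = 0 := by rw [← collapseAux_succ, h]; rfl
    rw [hy] at h1
    norm_num at h1
    exact h1
  rw [this, norm_zero] at hy
  norm_num at hy

theorem continuous_collapseAux : Continuous (collapseAux : (Fin d → ℝ) → _) := by
  refine (PiLp.continuous_toLp 2 _).comp (continuous_pi fun i => ?_)
  refine Fin.cases ?_ (fun k => ?_) i
  · simp only [Fin.cons_zero]; fun_prop
  · simp only [Fin.cons_succ, Pi.smul_apply]; fun_prop

/-- A map from `ℝᵈ` to the sphere collapsing the complement of the open unit cube to a point. -/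
noncomputable def collapse (y : Fin d → ℝ) :
    Metric.sphere (0 : EuclideanSpace ℝ (Fin (d + 1))) 1 :=
  ⟨‖collapseAux y‖⁻¹ • collapseAux y, by
    rw [mem_sphere_zero_iff_norm]
    exact norm_smul_inv_norm (𝕜 := ℝ) (collapseAux_ne_zero y)⟩

theorem continuous_collapse : Continuous (collapse : (Fin d → ℝ) → _) :=
  Continuous.subtype_mk ((continuous_collapseAux.norm.inv₀ fun y =>
    norm_ne_zero_iff.2 (collapseAux_ne_zero y)).smul continuous_collapseAux) _

theorem exists_collapseAux_eq {y y' : Fin d → ℝ} (h : collapse y = collapse y') :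
    ∃ c : ℝ, 0 < c ∧ collapseAux y = c • collapseAux y' := by
  have h1 : ‖collapseAux y‖⁻¹ • collapseAux y = ‖collapseAux y'‖⁻¹ • collapseAux y' :=
    congrArg Subtype.val h
  have hy := norm_pos_iff.2 (collapseAux_ne_zero y)
  have hy' := norm_pos_iff.2 (collapseAux_ne_zero y')
  refine ⟨‖collapseAux y‖ * ‖collapseAux y'‖⁻¹, by positivity, ?_⟩
  rw [mul_smul, ← h1, smul_smul, mul_inv_cancel₀ hy.ne', one_smul]

theorem eq_of_collapse_eq {y y' : Fin d → ℝ} (hy : ‖y‖ < 1) (h : collapse y = collapse y') :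
    y = y' := by
  obtain ⟨c, hc, e⟩ := exists_collapseAux_eq h
  have h0 : ‖y‖ - 1 / 2 = c * (‖y'‖ - 1 / 2) := congrArg (fun v => v 0) e
  have h1 : max 0 (1 - ‖y‖) • y = c • max 0 (1 - ‖y'‖) • y' :=
    funext fun k => congrArg (fun v => v k.succ) e
  have h2 := congrArg norm h1
  rw [norm_smul, norm_smul, norm_smul, Real.norm_of_nonneg hc.le,
    Real.norm_of_nonneg (le_max_left _ _), Real.norm_of_nonneg (le_max_left _ _)] at h2
  rw [max_eq_right (by linarith)] at h1 h2
  rcases le_or_gt 1 ‖y'‖ with hy' | hy'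
  · rw [max_eq_left (by linarith), zero_mul, mul_zero] at h2
    have : ‖y‖ = 0 := (mul_eq_zero.1 h2).resolve_left (by linarith)
    nlinarith
  · rw [max_eq_right (by linarith)] at h1 h2
    have h3 : (‖y'‖ - ‖y‖) * (1 / 4 + c * (‖y'‖ - 1 / 2) ^ 2) = 0 := by
      have e1 : (‖y'‖ - ‖y‖) * (1 / 4 + (‖y‖ - 1 / 2) * (‖y'‖ - 1 / 2)) =
          (1 - ‖y‖) * ‖y‖ * (‖y'‖ - 1 / 2) - (‖y‖ - 1 / 2) * ((1 - ‖y'‖) * ‖y'‖) := by ring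
      have e2 : c * (‖y'‖ - 1 / 2) ^ 2 = (‖y‖ - 1 / 2) * (‖y'‖ - 1 / 2) := by rw [h0]; ring
      rw [e2, e1, h2, h0]
      ring
    have h4 : ‖y'‖ = ‖y‖ := by
      have := (mul_eq_zero.1 h3).resolve_right (by positivity)
      linarith
    have hc1 : c = 1 := by
      rw [h4] at h0 h2
      nlinarith
    rw [hc1, one_smul, h4] at h1
    exact smul_right_injective _ (by linarith : (1 : ℝ) - ‖y‖ ≠ 0) h1

theorem collapse_eq_of_one_le {y y' : Fin d → ℝ} (hy : 1 ≤ ‖y‖) (hy' : 1 ≤ ‖y'‖) :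
    collapse y = collapse y' := by
  have key : ∀ y : Fin d → ℝ, 1 ≤ ‖y‖ →
      collapseAux y = (‖y‖ - 1 / 2) • WithLp.toLp 2 (Fin.cons 1 0) := by
    intro y hy
    ext i
    refine Fin.cases ?_ (fun k => ?_) i
    · simp [collapseAux_zero]
    · simp [collapseAux_succ, hy]
  refine Subtype.ext ?_
  have : ∀ (t : ℝ) (v : EuclideanSpace ℝ (Fin (d + 1))), 0 < t →
      ‖t • v‖⁻¹ • t • v = ‖v‖⁻¹ • v := by
    intro t v ht
    rw [norm_smul, Real.norm_of_nonneg ht.le, mul_inv, smul_smul]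
    congr 1
    field_simp
  simp only [collapse, key y hy, key y' hy']
  rw [this _ _ (by linarith), this _ _ (by linarith)]

end Collapse

section Labels

variable {p : ℕ} {S : Type*}

/-- The iterated cyclic shifts on the deleted product. -/
def deletedShift (a : ZMod p) (x : {f : ZMod p → S // ∃ k k', f k ≠ f k'}) :
    {f : ZMod p → S // ∃ k k', f k ≠ f k'} :=
  ⟨fun k => x.1 (k + a), by
    obtain ⟨k, k', h⟩ := x.2
    exact ⟨k - a, k' - a, by simpa using h⟩⟩

theorem deletedShift_deletedShift (a b : ZMod p) (x : {f : ZMod p → S // ∃ k k', f k ≠ f k'}) :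
    deletedShift a (deletedShift b x) = deletedShift (a + b) x :=
  Subtype.ext (funext fun k => congrArg x.1 (add_assoc k a b))

theorem deletedShift_zero (x : {f : ZMod p → S // ∃ k k', f k ≠ f k'}) :
    deletedShift 0 x = x :=
  Subtype.ext (funext fun k => congrArg x.1 (add_zero k))

theorem deletedShift_injective [Fact p.Prime] {a b : ZMod p}
    {x : {f : ZMod p → S // ∃ k k', f k ≠ f k'}} (h : deletedShift a x = deletedShift b x) :
    a = b := by
  by_contra hab
  have h1 : ∀ k, x.1 (k + (a - b)) = x.1 k := fun k => by
    have := congrFun (congrArg Subtype.val h) (k - b)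
    simpa [deletedShift, add_sub_assoc, sub_add_eq_add_sub] using this
  have h2 : ∀ (n : ℕ) k, x.1 (k + n * (a - b)) = x.1 k := by
    intro n
    induction n with
    | zero => simp
    | succ n ih =>
      intro k
      rw [Nat.cast_succ, add_mul, one_mul, ← add_assoc, h1, ih]
  obtain ⟨k, k', hk⟩ := x.2
  refine hk ?_
  rw [← h2 ((k' - k) / (a - b)).val k, ZMod.natCast_zmod_val,
    div_mul_cancel₀ _ (sub_ne_zero.2 hab), add_sub_cancel]

theorem exists_equivariant_index (p : ℕ) [Fact p.Prime] (S : Type*) :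
    ∃ ρ : {f : ZMod p → S // ∃ k k', f k ≠ f k'} → ZMod p,
      ∀ x b, ρ (deletedShift b x) = ρ x - b ∧
        deletedShift (ρ (deletedShift b x)) (deletedShift b x) = deletedShift (ρ x) x := by
  let s : Setoid {f : ZMod p → S // ∃ k k', f k ≠ f k'} :=
    { r := fun x y => ∃ a, y = deletedShift a x
      iseqv := ⟨fun x => ⟨0, (deletedShift_zero x).symm⟩,
        fun {x y} ⟨a, h⟩ => ⟨-a, by
          rw [h, deletedShift_deletedShift, neg_add_cancel, deletedShift_zero]⟩,
        fun {x y z} ⟨a, h⟩ ⟨b, h'⟩ => ⟨b + a, by rw [h', h, deletedShift_deletedShift]⟩⟩ }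
  have hout : ∀ x, ∃ a, (Quotient.mk s x).out = deletedShift a x :=
    fun x => s.symm (Quotient.mk_out x)
  choose ρ hρ using hout
  have key : ∀ x b, deletedShift (ρ (deletedShift b x)) (deletedShift b x) =
      deletedShift (ρ x) x := fun x b => by
    have h : Quotient.mk s (deletedShift b x) = Quotient.mk s x :=
      Quotient.sound (s.symm ⟨b, rfl⟩)
    rw [← hρ, ← hρ, h]
  refine ⟨ρ, fun x b => ⟨?_, key x b⟩⟩
  have := key x b
  rw [deletedShift_deletedShift] at this
  exact eq_sub_of_add_eq (deletedShift_injective this)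

/-- Equivariant labels at which the given equivariant functions are nonnegative. -/
theorem exists_equivariant_labels [Fact p.Prime] {r : ℕ}
    (h : {f : ZMod p → S // ∃ k k', f k ≠ f k'} → Fin r → ZMod p → ℝ)
    (hsum : ∀ x i, ∑ k, h x i k = 0)
    (hequiv : ∀ a x, h (deletedShift a x) = fun i k => h x i (k + a)) :
    ∃ l : {f : ZMod p → S // ∃ k k', f k ≠ f k'} → ℕ → ZMod p,
      (∀ x b k, l (deletedShift b x) k = l x k - b) ∧ ∀ x (i : Fin r), 0 ≤ h x i (l x i) := by
  obtain ⟨ρ, hρ⟩ := exists_equivariant_index p S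
  have hnn : ∀ x (k : ℕ), ∃ j, ∀ hk : k < r, 0 ≤ h x ⟨k, hk⟩ j := by
    intro x k
    by_cases hk : k < r
    · by_contra! hj
      have : ∑ j, h x ⟨k, hk⟩ j < 0 :=
        Finset.sum_neg (fun j _ => (hj j).2) Finset.univ_nonempty
      exact this.ne (hsum x _)
    · exact ⟨0, fun h => absurd h hk⟩
  choose g hg using hnn
  refine ⟨fun x k => g (deletedShift (ρ x) x) k + ρ x, fun x b k => ?_, fun x i => ?_⟩
  · beta_reduce
    rw [(hρ x b).2, (hρ x b).1, add_sub_assoc]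
  · have := hg (deletedShift (ρ x) x) i i.2
    rw [hequiv] at this
    exact this

end Labels

section Configuration

variable {p d : ℕ}

/-- Apply `collapse` to every row. -/
noncomputable def configuration (x : ZMod p × Fin d → ℝ) (i : ZMod p) :
    Metric.sphere (0 : EuclideanSpace ℝ (Fin (d + 1))) 1 :=
  collapse fun k => x (i, k)

theorem continuous_configuration : Continuous (configuration (p := p) (d := d)) :=
  continuous_pi fun _ => continuous_collapse.comp (by fun_prop)

theorem configuration_rowShift (x : ZMod p × Fin d → ℝ) (i : ZMod p) :
    configuration (rowShift x) i = configuration x (i - 1) := rfl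

theorem exists_configuration_ne {x : ZMod p × Fin d → ℝ} (hx : x ∈ smallRow p (Fin d)) :
    ∃ i j, configuration x i ≠ configuration x j := by
  obtain ⟨h, i, hi⟩ := hx
  by_contra! hc
  have hrow : ∀ j k, x (i, k) = x (j, k) := fun j k =>
    congrFun (eq_of_collapse_eq ((pi_norm_lt_iff one_pos).2 hi) (hc i j)) k
  exact h (subRow_eq_zero_iff.2 fun j j' k => (hrow j k).symm.trans (hrow j' k))

theorem configuration_add_single [NeZero p] {x : ZMod p × Fin d → ℝ} {y : ZMod p × Fin d}
    (hy : x y = 0) : configuration (x + Pi.single y 1) = configuration (x + Pi.single y (-1)) := by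
  have hlarge : ∀ a : ℝ, |a| = 1 → 1 ≤ ‖fun k => (x + Pi.single y a : _ → ℝ) (y.1, k)‖ := by
    intro a ha
    refine le_trans ?_ (norm_le_pi_norm _ y.2)
    simp [hy, ha]
  funext i
  by_cases hi : i = y.1
  · subst hi
    exact collapse_eq_of_one_le (hlarge 1 (by simp)) (hlarge (-1) (by simp))
  · refine congrArg collapse (funext fun k => ?_)
    have : (i, k) ≠ y := fun e => hi (congrArg Prod.fst e)
    simp [this]

end Configuration

end ListChain

/-- Proposition: if `r ≤ d` and `r(p-1) ≠ jd + 1` for all `j = 1, …, p-1`, then there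
is no `ℤ/p`-equivariant continuous map `X_{d,p} → S((Δʳ)^⊥)`. -/
theorem no_equivariant_map_deleted_product_to_sphere
    (p d r : ℕ) [NeZero p] (hp : p.Prime) (hodd : Odd p) (hd : 1 ≤ d) (hr : 1 ≤ r)
    (hrd : r ≤ d)
    (hjd : ∀ j : ℕ, 1 ≤ j → j ≤ p - 1 → r * (p - 1) ≠ j * d + 1) :
    ¬ ∃ h : {f : ZMod p → Metric.sphere (0 : EuclideanSpace ℝ (Fin (d + 1))) 1 //
          ∃ k k', f k ≠ f k'} → (Fin r → ZMod p → ℝ),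
      Continuous h ∧
      (∀ x, (∀ i : Fin r, ∑ k : ZMod p, h x i k = 0) ∧
        ∑ i : Fin r, ∑ k : ZMod p, (h x i k) ^ 2 = 1) ∧
      (∀ x, h (deletedProductShift x) = fun i k => h x i (k + 1)) := by
  rintro ⟨h, hcont, hval, hshift⟩
  have : Fact p.Prime := ⟨hp⟩
  obtain ⟨m, hm⟩ := hodd
  have hequiv : ∀ a x, h (ListChain.deletedShift a x) = fun i k => h x i (k + a) := by
    have key : ∀ (n : ℕ) x, h (ListChain.deletedShift (n : ZMod p) x) =
        fun i k => h x i (k + n) := by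
      intro n x
      induction n with
      | zero => simp [ListChain.deletedShift_zero]
      | succ n ih =>
        rw [Nat.cast_succ, add_comm (n : ZMod p), ← ListChain.deletedShift_deletedShift]
        refine (hshift _).trans ?_
        rw [ih]
        simp [add_assoc]
    intro a x
    simpa using key a.val x
  obtain ⟨l, hl, hl'⟩ := ListChain.exists_equivariant_labels h (fun x => (hval x).1) hequiv
  let Λ : (ZMod p → Metric.sphere (0 : EuclideanSpace ℝ (Fin (d + 1))) 1) → ℕ → ZMod p :=
    fun f => open Classical in if hf : ∃ k k', f k ≠ f k' then l ⟨f, hf⟩ else 0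
  have hΛ : ∀ f hf, Λ f = l ⟨f, hf⟩ := fun f hf => dif_pos hf
  refine ListChain.no_labelling (p := p) (d := d) hm hd
    (fun x => Λ (ListChain.configuration x)) (fun x hx => ?_) (A := Fin r × ZMod p)
    (fun a => {x | ∃ hx, h ⟨ListChain.configuration x, hx⟩ a.1 a.2 < 0}) (fun a => ?_)
    (fun x hx => ?_) (fun a => ⟨a.1, a.1.2.trans_le hrd, a.2, ?_⟩)
    (fun x y _ hy => congrArg Λ (ListChain.configuration_add_single hy))
  · have hx' := ListChain.exists_configuration_ne hx
    have hTx := ListChain.exists_configuration_ne (ListChain.rowShift_mem_smallRow hx)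
    rw [hΛ _ hx', hΛ _ hTx]
    funext k
    have e : (⟨ListChain.configuration x, hx'⟩ : {f : ZMod p → _ // ∃ k k', f k ≠ f k'}) =
        ListChain.deletedShift 1 ⟨_, hTx⟩ := by
      refine Subtype.ext (funext fun i => ?_)
      change _ = ListChain.configuration (ListChain.rowShift x) (i + 1)
      rw [ListChain.configuration_rowShift, add_sub_cancel_right]
    rw [e, hl, sub_add_cancel]
  · have hopen : IsOpen {f : ZMod p → Metric.sphere (0 : EuclideanSpace ℝ (Fin (d + 1))) 1 |
        ∃ k k', f k ≠ f k'} := by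
      simp only [Set.ofPred_exists]
      exact isOpen_iUnion fun k => isOpen_iUnion fun k' =>
        isOpen_ne_fun (continuous_apply k) (continuous_apply k')
    have hneg : IsOpen {y | h y a.1 a.2 < 0} :=
      isOpen_lt ((continuous_apply_apply a.1 a.2).comp hcont) continuous_const
    convert (hopen.isOpenMap_subtype_val _ hneg).preimage ListChain.continuous_configuration
      using 1
    ext x
    constructor
    · rintro ⟨hx, hx'⟩
      exact ⟨_, hx', rfl⟩
    · rintro ⟨⟨_, hf⟩, hf', rfl⟩
      exact ⟨hf, hf'⟩
  · have hx' := ListChain.exists_configuration_ne hx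
    by_contra hcon
    simp only [Set.mem_iUnion, not_exists] at hcon
    have hnn : ∀ i k, 0 ≤ h ⟨_, hx'⟩ i k := fun i k =>
      not_lt.1 fun hlt => hcon (i, k) ⟨hx', hlt⟩
    have h0 : ∀ i k, h ⟨_, hx'⟩ i k = 0 := fun i k =>
      (Finset.sum_eq_zero_iff_of_nonneg fun k _ => hnn i k).1 ((hval ⟨_, hx'⟩).1 i) k
        (Finset.mem_univ k)
    have := (hval ⟨_, hx'⟩).2
    simp [h0] at this
  · rintro x ⟨hx, hneg⟩ - e
    rw [hΛ _ hx] at e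
    have := hl' ⟨_, hx⟩ a.1
    rw [e] at this
    exact absurd hneg this.not_gt
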